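/- arXiv:1903.07773 — 14 statements merged into one kernel-verified Lean document; each statement's English description precedes it below -/
import Mathlib

section
/- Let (X,Y) be a coherent pair of random variables. Then for every δ ∈ [0, 1/2), P(|X − Y| ≥ 1 − δ) ≤ 2δ. -/
/-!
Let `A` be the event witnessing coherence. If `|X - Y| ≥ 1 - δ`, then one of the variables is at
most `δ` (it is "low") and the other is at least `1 - δ` (it is "high"). On `A` charge such an
outcome to the low variable, off `A` to the high one. A variable `Z` that is a version of
`P(A | σ(Z))` satisfies `P(A, Z ≤ δ) = E[Z; Z ≤ δ] ≤ δ P(Z ≤ δ)` and likewise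
`P(Aᶜ, Z ≥ 1 - δ) ≤ δ P(Z ≥ 1 - δ)`. Since `δ < 1/2`, being low and being high are disjoint, so `Z`
is charged at most `δ` in total (`charge_le`), and the two variables together at most `2δ`.
-/

open MeasureTheory

/-- A pair of random variables `(X, Y)` on a probability space, each with values in `[0,1]`,
is *coherent* if there is an event `A` such that `X` is a version of the conditional
probability of `A` given `σ(X)` and `Y` is a version of the conditional probability of `A`
given `σ(Y)`. -/
def IsCoherent {Ω : Type*} [MeasurableSpace Ω] (μ : Measure Ω) (X Y : Ω → ℝ) : Prop :=
  Measurable X ∧ Measurable Y ∧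
  (∀ ω, X ω ∈ Set.Icc (0:ℝ) 1) ∧ (∀ ω, Y ω ∈ Set.Icc (0:ℝ) 1) ∧
  ∃ A : Set Ω, MeasurableSet A ∧
    X =ᵐ[μ] μ[A.indicator (fun _ => (1:ℝ)) | MeasurableSpace.comap X inferInstance] ∧
    Y =ᵐ[μ] μ[A.indicator (fun _ => (1:ℝ)) | MeasurableSpace.comap Y inferInstance]

/-- Defining property of the conditional probability, integrated over an event of `σ(Z)`. -/
lemma setIntegral_eq_measureReal_inter {Ω : Type*} [MeasurableSpace Ω] (μ : Measure Ω)
    [IsProbabilityMeasure μ] {Z : Ω → ℝ} (hZ : Measurable Z) {A : Set Ω} (hA : MeasurableSet A)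
    (hZA : Z =ᵐ[μ] μ[A.indicator (fun _ => (1:ℝ)) | MeasurableSpace.comap Z inferInstance])
    {B : Set ℝ} (hB : MeasurableSet B) :
    ∫ ω in Z ⁻¹' B, Z ω ∂μ = μ.real (A ∩ Z ⁻¹' B) := by
  have hint : Integrable (A.indicator (fun _ => (1:ℝ))) μ := (integrable_const 1).indicator hA
  rw [setIntegral_congr_ae (hZ hB) (hZA.mono fun ω h _ => h),
    setIntegral_condExp hZ.comap_le hint ⟨B, hB, rfl⟩, setIntegral_indicator hA]
  simp [Set.inter_comm]

/-- The total charge of `Z`: the probability that `Z` is low on `A` or high off `A`. -/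
lemma charge_le {Ω : Type*} [MeasurableSpace Ω] (μ : Measure Ω)
    [IsProbabilityMeasure μ] {Z : Ω → ℝ} (hZ : Measurable Z) (hZ01 : ∀ ω, Z ω ∈ Set.Icc (0:ℝ) 1)
    {A : Set Ω} (hA : MeasurableSet A)
    (hZA : Z =ᵐ[μ] μ[A.indicator (fun _ => (1:ℝ)) | MeasurableSpace.comap Z inferInstance])
    {δ : ℝ} (hδ0 : 0 ≤ δ) (hδ : δ < 1/2) :
    μ.real (A ∩ Z ⁻¹' Set.Iic δ) + μ.real (Aᶜ ∩ Z ⁻¹' Set.Ici (1 - δ)) ≤ δ := by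
  have hint : Integrable Z μ := by
    refine Integrable.of_bound hZ.aestronglyMeasurable 1 (Filter.Eventually.of_forall fun ω => ?_)
    rw [Real.norm_eq_abs, abs_le]
    constructor <;> linarith [(hZ01 ω).1, (hZ01 ω).2]
  have hL : MeasurableSet (Z ⁻¹' Set.Iic δ) := hZ measurableSet_Iic
  have hH : MeasurableSet (Z ⁻¹' Set.Ici (1 - δ)) := hZ measurableSet_Ici
  have low : μ.real (A ∩ Z ⁻¹' Set.Iic δ) ≤ δ * μ.real (Z ⁻¹' Set.Iic δ) := by
    rw [← setIntegral_eq_measureReal_inter μ hZ hA hZA measurableSet_Iic]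
    have h := setIntegral_mono_on hint.integrableOn (integrable_const δ).integrableOn hL
      (fun ω hω => hω)
    simpa [mul_comm] using h
  have high : (1 - δ) * μ.real (Z ⁻¹' Set.Ici (1 - δ)) ≤ μ.real (A ∩ Z ⁻¹' Set.Ici (1 - δ)) := by
    rw [← setIntegral_eq_measureReal_inter μ hZ hA hZA measurableSet_Ici]
    have h := setIntegral_mono_on (integrable_const (1 - δ)).integrableOn hint.integrableOn hH
      (fun ω hω => hω)
    simpa [mul_comm] using h
  have split : μ.real (A ∩ Z ⁻¹' Set.Ici (1 - δ)) + μ.real (Aᶜ ∩ Z ⁻¹' Set.Ici (1 - δ))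
      = μ.real (Z ⁻¹' Set.Ici (1 - δ)) := by
    have h := measureReal_inter_add_sdiff (μ := μ) (s := Z ⁻¹' Set.Ici (1 - δ)) hA
    rwa [Set.inter_comm, Set.sdiff_eq, Set.inter_comm _ Aᶜ] at h
  have disj : μ.real (Z ⁻¹' Set.Iic δ) + μ.real (Z ⁻¹' Set.Ici (1 - δ)) ≤ 1 := by
    rw [← measureReal_union _ hH]
    · exact measureReal_le_one
    · refine Set.disjoint_left.2 fun ω h1 h2 => ?_
      simp only [Set.mem_preimage, Set.mem_Iic, Set.mem_Ici] at h1 h2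
      linarith
  nlinarith

theorem stmt_0 {Ω : Type*} [MeasurableSpace Ω] (μ : Measure Ω) [IsProbabilityMeasure μ]
    (X Y : Ω → ℝ) (hXY : IsCoherent μ X Y) (δ : ℝ) (hδ0 : 0 ≤ δ) (hδ : δ < 1/2) :
    (μ {ω | 1 - δ ≤ |X ω - Y ω|}).toReal ≤ 2 * δ := by
  obtain ⟨hX, hY, hX01, hY01, A, hA, hXA, hYA⟩ := hXY
  have cX := charge_le μ hX hX01 hA hXA hδ0 hδ
  have cY := charge_le μ hY hY01 hA hYA hδ0 hδ
  have cover : {ω | 1 - δ ≤ |X ω - Y ω|} ⊆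
      ((A ∩ X ⁻¹' Set.Iic δ) ∪ (Aᶜ ∩ X ⁻¹' Set.Ici (1 - δ))) ∪
      ((A ∩ Y ⁻¹' Set.Iic δ) ∪ (Aᶜ ∩ Y ⁻¹' Set.Ici (1 - δ))) := by
    intro ω hω
    obtain ⟨hx0, hx1⟩ := hX01 ω
    obtain ⟨hy0, hy1⟩ := hY01 ω
    simp only [Set.mem_union, Set.mem_inter_iff, Set.mem_compl_iff, Set.mem_preimage,
      Set.mem_Iic, Set.mem_Ici]
    rcases le_abs.1 (show 1 - δ ≤ |X ω - Y ω| from hω) with h | h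
    · by_cases hωA : ω ∈ A
      · exact Or.inr (Or.inl ⟨hωA, by linarith⟩)
      · exact Or.inl (Or.inr ⟨hωA, by linarith⟩)
    · by_cases hωA : ω ∈ A
      · exact Or.inl (Or.inl ⟨hωA, by linarith⟩)
      · exact Or.inr (Or.inr ⟨hωA, by linarith⟩)
  change μ.real {ω | 1 - δ ≤ |X ω - Y ω|} ≤ 2 * δ
  have h1 := measureReal_mono (μ := μ) cover
  have h2 := measureReal_union_le (μ := μ)
    ((A ∩ X ⁻¹' Set.Iic δ) ∪ (Aᶜ ∩ X ⁻¹' Set.Ici (1 - δ)))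
    ((A ∩ Y ⁻¹' Set.Iic δ) ∪ (Aᶜ ∩ Y ⁻¹' Set.Ici (1 - δ)))
  have h3 := measureReal_union_le (μ := μ) (A ∩ X ⁻¹' Set.Iic δ) (Aᶜ ∩ X ⁻¹' Set.Ici (1 - δ))
  have h4 := measureReal_union_le (μ := μ) (A ∩ Y ⁻¹' Set.Iic δ) (Aᶜ ∩ Y ⁻¹' Set.Ici (1 - δ))
  linarith
end

section
/- Let Y be a random variable with 0 ≤ Y ≤ 1 on a probability space (Ω,F,P), and let X = E[Y | σ(X)] almost surely (i.e., X is a version of the conditional expectation of Y given X). Then for every δ ∈ [0, 1/2), P(|Y − X| ≥ 1 − δ) ≤ δ. -/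
/-!
Let `A = {X ≤ δ}` and `B = {1 - δ ≤ X}`, disjoint because `δ < 1/2`, and let
`E = {1 - δ ≤ |Y - X|}`. Almost surely `X` lies in `[0, 1]`, and then
`1_E ≤ δ + 1_A (Y - X) - 1_B (Y - X)` pointwise:

* on `A`, `Y - X ≥ -δ` always, and on `E ∩ A` one has `Y - X ≥ 1 - δ`;
* on `B`, `X - Y ≥ -δ` always, and on `E ∩ B` one has `X - Y ≥ 1 - δ`;
* off `A ∪ B`, `|Y - X| < 1 - δ`.

Since `A` and `B` are `σ(X)`-measurable, `Y - X` integrates to `0` over each of them, so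
integrating the inequality gives `P(E) ≤ δ`.
-/

open MeasureTheory

theorem stmt_2 {Ω : Type*} [MeasurableSpace Ω] (μ : Measure Ω) [IsProbabilityMeasure μ]
    (X Y : Ω → ℝ) (hX : Measurable X) (hY : Measurable Y)
    (hY01 : ∀ ω, Y ω ∈ Set.Icc (0:ℝ) 1)
    (hcond : X =ᵐ[μ] μ[Y | MeasurableSpace.comap X inferInstance])
    (δ : ℝ) (hδ0 : 0 ≤ δ) (hδ : δ < 1/2) :
    (μ {ω | 1 - δ ≤ |Y ω - X ω|}).toReal ≤ δ := by
  have hm := hX.comap_le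
  have hYi : Integrable Y μ := Integrable.of_mem_Icc 0 1 hY.aemeasurable (ae_of_all _ hY01)
  have hXi : Integrable X μ := integrable_condExp.congr hcond.symm
  have hX0 : ∀ᵐ ω ∂μ, 0 ≤ X ω := by
    filter_upwards [hcond, condExp_nonneg (m := MeasurableSpace.comap X inferInstance)
      (ae_of_all μ fun ω => (hY01 ω).1)] with ω h1 h2
    rw [h1]
    exact h2
  have hX1 : ∀ᵐ ω ∂μ, X ω ≤ 1 := by
    filter_upwards [hcond, condExp_mono (m := MeasurableSpace.comap X inferInstance)
      hYi (integrable_const (1 : ℝ)) (ae_of_all μ fun ω => (hY01 ω).2)] with ω h1 h2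
    rw [h1]
    simpa [condExp_const hm] using h2
  have key : ∀ S : Set ℝ, MeasurableSet S →
      ∫ ω, (X ⁻¹' S).indicator (fun ω => Y ω - X ω) ω ∂μ = 0 := by
    intro S hS
    rw [integral_indicator (hX hS), integral_sub hYi.integrableOn hXi.integrableOn,
      ← setIntegral_condExp hm hYi ⟨S, hS, rfl⟩,
      setIntegral_congr_ae (hX hS) (hcond.mono fun ω h _ => h), sub_self]
  have hint : ∀ S : Set ℝ, MeasurableSet S →
      Integrable ((X ⁻¹' S).indicator (fun ω => Y ω - X ω)) μ :=
    fun S hS => (hYi.sub hXi).indicator (hX hS)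
  have hE : MeasurableSet {ω | 1 - δ ≤ |Y ω - X ω|} :=
    measurableSet_le measurable_const (hY.sub hX).abs
  have hA := hint (Set.Iic δ) measurableSet_Iic
  have hB := hint (Set.Ici (1 - δ)) measurableSet_Ici
  have hc : Integrable (fun _ : Ω => δ) μ := integrable_const δ
  calc (μ {ω | 1 - δ ≤ |Y ω - X ω|}).toReal
      = ∫ ω, {ω | 1 - δ ≤ |Y ω - X ω|}.indicator (1 : Ω → ℝ) ω ∂μ :=
        (integral_indicator_one hE).symm
    _ ≤ ∫ ω, (δ + (X ⁻¹' Set.Iic δ).indicator (fun ω => Y ω - X ω) ω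
          - (X ⁻¹' Set.Ici (1 - δ)).indicator (fun ω => Y ω - X ω) ω) ∂μ := by
        refine integral_mono_ae ((integrable_const (1 : ℝ)).indicator hE)
          ((hc.add hA).sub hB) ?_
        filter_upwards [hX0, hX1] with ω h0 h1
        obtain ⟨y0, y1⟩ := hY01 ω
        classical
        simp only [Set.indicator_apply, Set.mem_preimage, Set.mem_Iic, Set.mem_Ici,
          Set.mem_ofPred_eq, Pi.one_apply, le_abs]
        clear key hint hA hB hE hX0 hX1 hcond hY01
        split_ifs <;> grind
    _ = δ := by
        rw [integral_sub (by exact hc.add hA) hB, integral_add hc hA,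
          key _ measurableSet_Iic, key _ measurableSet_Ici]
        simp
end

section
/- Let A, G, H be events in a probability space (Ω,F,P) with P(G) > 0 and P(H) > 0. Then |P(A∩G)/P(G) − P(A∩H)/P(H)| ≤ 1 − P(G∩H) / (P(G) + P(H) − P(G∩H)). -/
/-!
Write `g, h, k` for the measures of `G`, `H`, `G ∩ H` and `a` for that of `A ∩ G ∩ H`. Since
`μ (A ∩ G) ≤ a + (g - k)` and `μ (A ∩ H) ≥ a`, the difference of the conditional probabilities is
at most `1 - ((k - a) / g + a / h)`. Both `g` and `h` are at most `g + h - k`, so replacing each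
denominator by `g + h - k` only enlarges this expression, which becomes `1 - k / (g + h - k)`.
Exchanging `G` and `H` bounds the absolute value.
-/

open MeasureTheory

/-- The one-sided bound, with `x` and `y` standing for the measures of `A ∩ G` and `A ∩ H`. -/
lemma div_sub_div_le_one_sub {g h k a x y : ℝ} (hg : 0 < g) (hh : 0 < h) (ha : 0 ≤ a)
    (hak : a ≤ k) (hkg : k ≤ g) (hkh : k ≤ h) (hx : x ≤ a + (g - k)) (hy : a ≤ y) :
    x / g - y / h ≤ 1 - k / (g + h - k) := by
  have hk : 0 ≤ k := ha.trans hak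
  have h1 : x / g ≤ (a + (g - k)) / g := by gcongr
  have h2 : a / h ≤ y / h := by gcongr
  have h3 : (a + (g - k)) / g = 1 - (k - a) / g := by field_simp; ring
  have h4 : k / (g + h - k) ≤ (k - a) / g + a / h := by
    have e : k / (g + h - k) = (k - a) / (g + h - k) + a / (g + h - k) := by ring
    have e1 : (k - a) / (g + h - k) ≤ (k - a) / g :=
      div_le_div_of_nonneg_left (by linarith) hg (by linarith)
    have e2 : a / (g + h - k) ≤ a / h :=
      div_le_div_of_nonneg_left ha hh (by linarith)
    linarith
  linarith

lemma measureReal_inter_le_add_sub {Ω : Type*} [MeasurableSpace Ω] (μ : Measure Ω)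
    [IsFiniteMeasure μ] (A G H : Set Ω) (hH : MeasurableSet H) :
    μ.real (A ∩ G) ≤ μ.real (A ∩ (G ∩ H)) + (μ.real G - μ.real (G ∩ H)) := by
  have h1 := measureReal_inter_add_sdiff (μ := μ) (s := A ∩ G) hH
  have h2 := measureReal_inter_add_sdiff (μ := μ) (s := G) hH
  have h3 : μ.real ((A ∩ G) \ H) ≤ μ.real (G \ H) :=
    measureReal_mono (Set.sdiff_subset_sdiff_left Set.inter_subset_right)
  rw [Set.inter_assoc] at h1
  linarith

theorem stmt_4 {Ω : Type*} [MeasurableSpace Ω] (μ : Measure Ω) [IsProbabilityMeasure μ]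
    (A G H : Set Ω) (hA : MeasurableSet A) (hG : MeasurableSet G) (hH : MeasurableSet H)
    (hG0 : 0 < μ G) (hH0 : 0 < μ H) :
    |(μ (A ∩ G)).toReal / (μ G).toReal - (μ (A ∩ H)).toReal / (μ H).toReal| ≤
      1 - (μ (G ∩ H)).toReal / ((μ G).toReal + (μ H).toReal - (μ (G ∩ H)).toReal) := by
  simp only [← measureReal_def]
  have hg : 0 < μ.real G := ENNReal.toReal_pos hG0.ne' (measure_ne_top μ G)
  have hh : 0 < μ.real H := ENNReal.toReal_pos hH0.ne' (measure_ne_top μ H)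
  have ha : 0 ≤ μ.real (A ∩ (G ∩ H)) := measureReal_nonneg
  have hak : μ.real (A ∩ (G ∩ H)) ≤ μ.real (G ∩ H) := measureReal_mono Set.inter_subset_right
  have hkg : μ.real (G ∩ H) ≤ μ.real G := measureReal_mono Set.inter_subset_left
  have hkh : μ.real (G ∩ H) ≤ μ.real H := measureReal_mono Set.inter_subset_right
  have hxG := measureReal_inter_le_add_sub μ A G H hH
  have hxH := measureReal_inter_le_add_sub μ A H G hG
  rw [Set.inter_comm H G] at hxH
  have hyG : μ.real (A ∩ (G ∩ H)) ≤ μ.real (A ∩ G) :=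
    measureReal_mono (Set.inter_subset_inter_right A Set.inter_subset_left)
  have hyH : μ.real (A ∩ (G ∩ H)) ≤ μ.real (A ∩ H) :=
    measureReal_mono (Set.inter_subset_inter_right A Set.inter_subset_right)
  refine abs_sub_le_iff.2 ⟨div_sub_div_le_one_sub hg hh ha hak hkg hkh hxG hyH, ?_⟩
  rw [add_comm (μ.real G)]
  exact div_sub_div_le_one_sub hh hg ha hak hkh hkg hxH hyG
end

section
/- Let A, G, H be events in a probability space (Ω,F,P) with P(G) > 0 and P(H) > 0, and let δ ∈ [0,1]. If |P(A∩G)/P(G) − P(A∩H)/P(H)| ≥ 1 − δ, then P(G∩H) ≤ (δ/(1+δ)) · (P(G) + P(H)). -/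
/-!
By symmetry in `G` and `H`, the difference `P(A | G) - P(A | H)` may be taken to be at least `1 - δ`.
Write `x = P(A ∩ G ∩ H)` and `y = P((G ∩ H) \ A)`. Then `P(A | G) ≤ 1 - y / P(G)` and
`P(A | H) ≥ x / P(H)`, so `y / P(G) + x / P(H) ≤ δ`, whence
`P(G ∩ H) = x + y ≤ δ * max (P(G)) (P(H))`. Adding `δ` times `P(G ∩ H) ≤ min (P(G)) (P(H))`
gives `(1 + δ) * P(G ∩ H) ≤ δ * (P(G) + P(H))`.
-/

open MeasureTheory

/-- The arithmetic core: `g, h, k, a, b` are the probabilities of `G`, `H`, `G ∩ H`, `A ∩ G`,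
`A ∩ H`, and `x + y = k` splits `G ∩ H` along `A`. -/
lemma overlap_arith {g h k a b x y δ : ℝ} (hg : 0 < g) (hh : 0 < h) (hδ : 0 ≤ δ)
    (hx : 0 ≤ x) (hy : 0 ≤ y) (hk : x + y = k) (hkg : k ≤ g) (hkh : k ≤ h)
    (ha : a + y ≤ g) (hb : x ≤ b) (hd : 1 - δ ≤ a / g - b / h) :
    k ≤ δ / (1 + δ) * (g + h) := by
  have h1 : a / g ≤ 1 - y / g := by
    rw [div_le_iff₀ hg, sub_mul, div_mul_cancel₀ _ hg.ne']
    linarith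
  have h2 : x / h ≤ b / h := by gcongr
  have h3 : y / g + x / h ≤ δ := by linarith
  rw [div_mul_eq_mul_div, le_div_iff₀ (by linarith)]
  rcases le_total g h with hgh | hgh
  · have h4 : y / h ≤ y / g := by gcongr
    have h5 : (x + y) / h ≤ δ := by rw [add_div]; linarith
    rw [div_le_iff₀ hh] at h5
    nlinarith [mul_le_mul_of_nonneg_left hkg hδ]
  · have h4 : x / g ≤ x / h := by gcongr
    have h5 : (x + y) / g ≤ δ := by rw [add_div]; linarith
    rw [div_le_iff₀ hg] at h5
    nlinarith [mul_le_mul_of_nonneg_left hkh hδ]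

/-- The bound when the conditional probability given `G` is the larger one. -/
lemma overlap_of_le_sub {Ω : Type*} [MeasurableSpace Ω] (μ : Measure Ω) [IsProbabilityMeasure μ]
    (A G H : Set Ω) (hA : MeasurableSet A)
    (hG0 : 0 < μ G) (hH0 : 0 < μ H) (δ : ℝ) (hδ0 : 0 ≤ δ)
    (h : 1 - δ ≤ μ.real (A ∩ G) / μ.real G - μ.real (A ∩ H) / μ.real H) :
    μ.real (G ∩ H) ≤ δ / (1 + δ) * (μ.real G + μ.real H) := by
  have hsplit := measureReal_inter_add_sdiff (μ := μ) (s := G ∩ H) hA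
  have hsplitG := measureReal_inter_add_sdiff (μ := μ) (s := G) hA
  have hdiff : μ.real ((G ∩ H) \ A) ≤ μ.real (G \ A) :=
    measureReal_mono (Set.sdiff_subset_sdiff_left Set.inter_subset_left)
  have hinter : μ.real (G ∩ H ∩ A) ≤ μ.real (A ∩ H) :=
    measureReal_mono fun _ hω => ⟨hω.2, hω.1.2⟩
  rw [Set.inter_comm G A] at hsplitG
  exact overlap_arith (ENNReal.toReal_pos hG0.ne' (measure_ne_top _ _))
    (ENNReal.toReal_pos hH0.ne' (measure_ne_top _ _)) hδ0
    measureReal_nonneg measureReal_nonneg hsplit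
    (measureReal_mono Set.inter_subset_left) (measureReal_mono Set.inter_subset_right)
    (by linarith) hinter h

theorem stmt_5 {Ω : Type*} [MeasurableSpace Ω] (μ : Measure Ω) [IsProbabilityMeasure μ]
    (A G H : Set Ω) (hA : MeasurableSet A) (hG : MeasurableSet G) (hH : MeasurableSet H)
    (hG0 : 0 < μ G) (hH0 : 0 < μ H) (δ : ℝ) (hδ0 : 0 ≤ δ) (hδ1 : δ ≤ 1)
    (h : 1 - δ ≤ |(μ (A ∩ G)).toReal / (μ G).toReal - (μ (A ∩ H)).toReal / (μ H).toReal|) :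
    (μ (G ∩ H)).toReal ≤ δ / (1 + δ) * ((μ G).toReal + (μ H).toReal) := by
  rcases le_abs.mp h with h | h
  · exact overlap_of_le_sub μ A G H hA hG0 hH0 δ hδ0 h
  · rw [neg_sub] at h
    rw [Set.inter_comm, add_comm (μ G).toReal]
    exact overlap_of_le_sub μ A H G hA hH0 hG0 δ hδ0 h
end

section
/- Let 0 ≤ x₁ < x₂ ≤ 1 and 0 ≤ y₁ < y₂ ≤ 1. There exists a coherent pair of random variables (X,Y) with X ∈ {x₁, x₂} almost surely and Y ∈ {y₁, y₂} almost surely if and only if max(x₁, y₁) ≤ min(x₂, y₂), i.e., if and only if the rectangle [x₁,x₂] × [y₁,y₂] intersects the diagonal {(p,p) : 0 ≤ p ≤ 1}. -/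
/-!
If `(X, Y)` is coherent with event `A`, the tower property gives `E X = P(A) = E Y`; this common
mean lies in both `[x₁, x₂]` and `[y₁, y₂]`, so the two intervals meet.

Conversely, let `p = max x₁ y₁ ≤ min x₂ y₂`. Then `p` equals `x₁` or `y₁`, so one of the two
variables may be taken constant equal to `p`, which is coherent with any event of probability `p`.
For the other one, `exists_two_valued` provides a calibrated two-valued variable and an event of
probability `p`, on a four-point probability space.
-/

open MeasureTheory

/-- A conditional probability of `A` that lives almost surely on `{a, b}` forces
the mean of the indicator of `A` into `[a, b]`. -/
lemma prob_mem_Icc {Ω : Type} [MeasurableSpace Ω] {μ : Measure Ω} [IsProbabilityMeasure μ]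
    {X : Ω → ℝ} (hX : Measurable X) {A : Set Ω} {a b : ℝ} (hab : a < b)
    (h : X =ᵐ[μ] μ[A.indicator (fun _ => (1:ℝ)) | MeasurableSpace.comap X inferInstance])
    (hv : ∀ᵐ ω ∂μ, X ω = a ∨ X ω = b) :
    ∫ ω, A.indicator (fun _ => (1:ℝ)) ω ∂μ ∈ Set.Icc a b := by
  have hI : Integrable X μ := integrable_condExp.congr h.symm
  have e : ∫ ω, X ω ∂μ = ∫ ω, A.indicator (fun _ => (1:ℝ)) ω ∂μ := by
    rw [integral_congr_ae h, integral_condExp hX.comap_le]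
  rw [← e]
  constructor
  · have := integral_mono_ae (μ := μ) (integrable_const a) hI
      (by filter_upwards [hv] with ω hω; rcases hω with h | h <;> rw [h]; exact hab.le)
    simpa using this
  · have := integral_mono_ae (μ := μ) hI (integrable_const b)
      (by filter_upwards [hv] with ω hω; rcases hω with h | h <;> rw [h]; exact hab.le)
    simpa using this

/-- The law on `Bool × Bool` whose first coordinate is `true` with probability `q`, and whose
second coordinate is `true` with conditional probability `b` or `a` according to whether the first
one is `true` or `false`. -/
noncomputable def twoStep (a b q : ℝ) (ha : a ∈ Set.Icc (0:ℝ) 1) (hb : b ∈ Set.Icc (0:ℝ) 1)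
    (hq : q ∈ Set.Icc (0:ℝ) 1) : PMF (Bool × Bool) :=
  PMF.ofFintype
    (fun ω => ENNReal.ofReal ((if ω.1 then q else 1 - q) *
      (if ω.2 then (if ω.1 then b else a) else 1 - (if ω.1 then b else a)))) (by
    obtain ⟨ha0, ha1⟩ := ha
    obtain ⟨hb0, hb1⟩ := hb
    obtain ⟨hq0, hq1⟩ := hq
    rw [← ENNReal.ofReal_sum_of_nonneg]
    · simp [Fintype.sum_prod_type]
      ring
    · rintro ⟨_ | _, _ | _⟩ - <;> simp <;> apply mul_nonneg <;> linarith)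

lemma integral_twoStep {a b q : ℝ} (ha : a ∈ Set.Icc (0:ℝ) 1) (hb : b ∈ Set.Icc (0:ℝ) 1)
    (hq : q ∈ Set.Icc (0:ℝ) 1) (f : Bool × Bool → ℝ) :
    ∫ ω, f ω ∂(twoStep a b q ha hb hq).toMeasure =
      q * b * f (true, true) + q * (1 - b) * f (true, false) +
      ((1 - q) * a * f (false, true) + (1 - q) * (1 - a) * f (false, false)) := by
  rw [PMF.integral_eq_sum]
  obtain ⟨ha0, ha1⟩ := ha
  obtain ⟨hb0, hb1⟩ := hb
  obtain ⟨hq0, hq1⟩ := hq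
  have h1 : 0 ≤ q * b := mul_nonneg hq0 hb0
  have h2 : 0 ≤ q * (1 - b) := mul_nonneg hq0 (by linarith)
  have h3 : 0 ≤ (1 - q) * a := mul_nonneg (by linarith) ha0
  have h4 : 0 ≤ (1 - q) * (1 - a) := mul_nonneg (by linarith) (by linarith)
  simp [twoStep, Fintype.sum_prod_type, ENNReal.toReal_ofReal, h1, h2, h3, h4, -ENNReal.ofReal_mul]

/-- Every `p ∈ [a, b] ⊆ [0, 1]` is the probability of an event `A` admitting an
`{a, b}`-valued `Y` with `Y = P(A | Y)`. -/
lemma exists_two_valued {a b p : ℝ} (ha : 0 ≤ a) (hab : a < b) (hb : b ≤ 1)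
    (hp : p ∈ Set.Icc a b) :
    ∃ (Ω : Type) (_ : MeasurableSpace Ω) (μ : Measure Ω) (_ : IsProbabilityMeasure μ)
      (Y : Ω → ℝ) (A : Set Ω), Measurable Y ∧ MeasurableSet A ∧ (∀ ω, Y ω = a ∨ Y ω = b) ∧
      Y =ᵐ[μ] μ[A.indicator (fun _ => (1:ℝ)) | MeasurableSpace.comap Y inferInstance] ∧
      ∫ ω, A.indicator (fun _ => (1:ℝ)) ω ∂μ = p := by
  have ha' : a ∈ Set.Icc (0:ℝ) 1 := ⟨ha, by linarith⟩
  have hb' : b ∈ Set.Icc (0:ℝ) 1 := ⟨by linarith, hb⟩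
  have hd : 0 < b - a := by linarith
  -- The weight of the value `b` is the solution of `q * b + (1 - q) * a = p`.
  have hq : (p - a) / (b - a) ∈ Set.Icc (0:ℝ) 1 :=
    ⟨div_nonneg (by linarith [hp.1]) hd.le, by rw [div_le_one hd]; linarith [hp.2]⟩
  have hqd : (p - a) / (b - a) * (b - a) = p - a := div_mul_cancel₀ _ hd.ne'
  generalize (p - a) / (b - a) = q at hq hqd
  let Y : Bool × Bool → ℝ := fun ω => if ω.1 then b else a
  have hY : Measurable Y := Measurable.of_discrete
  refine ⟨Bool × Bool, inferInstance, (twoStep a b q ha' hb' hq).toMeasure, inferInstance,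
    Y, {ω | ω.2 = true}, hY, MeasurableSet.of_discrete, ?_, ?_, ?_⟩
  · rintro ⟨_ | _, _⟩ <;> simp [Y]
  · refine ae_eq_condExp_of_forall_setIntegral_eq hY.comap_le Integrable.of_finite
      (fun _ _ _ => Integrable.of_finite.integrableOn) ?_
      (comap_measurable Y).stronglyMeasurable.aestronglyMeasurable
    rintro s ⟨t, -, rfl⟩ -
    rw [← integral_indicator MeasurableSet.of_discrete,
      ← integral_indicator MeasurableSet.of_discrete, integral_twoStep, integral_twoStep]
    by_cases h1 : a ∈ t <;> by_cases h2 : b ∈ t <;> simp [Set.indicator, Y, h1, h2] <;> ring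
  · rw [integral_twoStep]
    simp [Set.indicator]
    linarith

/-- The constant `E f` is the conditional expectation of `f` given the σ-algebra it generates, which
is trivial. -/
lemma const_condExp {Ω : Type} [MeasurableSpace Ω] {μ : Measure Ω} [IsProbabilityMeasure μ]
    {f : Ω → ℝ} {p : ℝ} (h : ∫ ω, f ω ∂μ = p) :
    (fun _ => p) =ᵐ[μ] μ[f | MeasurableSpace.comap (fun _ : Ω => p) inferInstance] := by
  rw [MeasurableSpace.comap_const, condExp_bot, h]

theorem stmt_6 (x₁ x₂ y₁ y₂ : ℝ) (hx0 : 0 ≤ x₁) (hx : x₁ < x₂) (hx1 : x₂ ≤ 1)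
    (hy0 : 0 ≤ y₁) (hy : y₁ < y₂) (hy1 : y₂ ≤ 1) :
    (∃ (Ω : Type) (_ : MeasurableSpace Ω) (μ : Measure Ω) (_ : IsProbabilityMeasure μ)
      (X Y : Ω → ℝ), IsCoherent μ X Y ∧
        (∀ᵐ ω ∂μ, X ω = x₁ ∨ X ω = x₂) ∧ (∀ᵐ ω ∂μ, Y ω = y₁ ∨ Y ω = y₂)) ↔
      max x₁ y₁ ≤ min x₂ y₂ := by
  constructor
  · rintro ⟨Ω, _, μ, _, X, Y, ⟨hX, hY, -, -, A, -, hXA, hYA⟩, hXv, hYv⟩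
    have h1 := prob_mem_Icc hX hx hXA hXv
    have h2 := prob_mem_Icc hY hy hYA hYv
    exact (max_le h1.1 h2.1).trans (le_min h1.2 h2.2)
  · intro h
    simp only [max_le_iff, le_min_iff] at h
    obtain ⟨⟨-, h12⟩, h21, -⟩ := h
    rcases le_total y₁ x₁ with hle | hle
    · obtain ⟨Ω, _, μ, _, Y, A, hY, hA, hv, hc, hi⟩ :=
        exists_two_valued hy0 hy hy1 (p := x₁) ⟨hle, by assumption⟩
      refine ⟨Ω, inferInstance, μ, inferInstance, fun _ => x₁, Y,
        ⟨measurable_const, hY, fun _ => ⟨hx0, by linarith⟩, fun ω => ?_, A, hA,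
          const_condExp hi, hc⟩, by simp, Filter.Eventually.of_forall hv⟩
      rcases hv ω with h | h <;> rw [h] <;> constructor <;> linarith
    · obtain ⟨Ω, _, μ, _, X, A, hX, hA, hv, hc, hi⟩ :=
        exists_two_valued hx0 hx hx1 (p := y₁) ⟨hle, by assumption⟩
      refine ⟨Ω, inferInstance, μ, inferInstance, X, fun _ => y₁,
        ⟨hX, measurable_const, fun ω => ?_, fun _ => ⟨hy0, by linarith⟩, A, hA,
          hc, const_condExp hi⟩, Filter.Eventually.of_forall hv, by simp⟩
      rcases hv ω with h | h <;> rw [h] <;> constructor <;> linarith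
end

section
/- Let (X,Y) be a coherent pair of random variables, each taking at most countably many values, and fix δ ∈ (0, 1/2). Suppose that for any two pairs of real numbers (x,y) and (x′,y′) with P(X = x, Y = y) > 0, P(X = x′, Y = y′) > 0, |y − x| ≥ 1 − δ and |y′ − x′| ≥ 1 − δ, if (x,y) ≠ (x′,y′) then x ≠ x′ and y ≠ y′. Then P(|Y − X| ≥ 1 − δ) ≤ 2δ/(1 + δ). -/
/-!
Let `f` be the indicator of the event `A`, let `U = {Y - X ≥ 1 - δ}`, `D = {X - Y ≥ 1 - δ}` and let
`G` be the event `|Y - X| < 1 - δ`. By coherence the integrals of `f - X` over `{X ≤ δ}` and of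
`f - Y` over `{Y ≥ 1 - δ}` vanish. The difference
`1_{Y ≥ 1 - δ} (f - Y) - 1_{X ≤ δ} (f - X)` has mean zero; it equals `X - Y ≤ -(1 - δ)` on `U`,
it vanishes on `D` (as `δ < 1/2`), and it is at most `δ` on `G`, because for either value of `f`
only one of the two terms can be positive. Integrating gives `(1 - δ) P(U) ≤ δ P(G)`
(`IsCoherent.upper_bound`). Exchanging `X` and `Y` gives `(1 - δ) P(D) ≤ δ P(G)`, and the sum of the
two, together with `P(U) + P(D) + P(G) = 1`, is the claim.
-/

open MeasureTheory

/-- If `Z` is a version of the conditional probability of `A` given `σ(Z)`, then `1_A - Z`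
integrates to zero over every event `{Z ∈ S}`. -/
lemma integral_indicator_preimage_sub_eq_zero {Ω : Type*} [MeasurableSpace Ω] (μ : Measure Ω)
    [IsProbabilityMeasure μ] {Z : Ω → ℝ} {A : Set Ω} {S : Set ℝ} (hZ : Measurable Z)
    (hA : MeasurableSet A) (hS : MeasurableSet S)
    (h : Z =ᵐ[μ] μ[A.indicator (fun _ => (1:ℝ)) | MeasurableSpace.comap Z inferInstance]) :
    Integrable ((Z ⁻¹' S).indicator (fun ω => A.indicator (fun _ => (1:ℝ)) ω - Z ω)) μ ∧
    ∫ ω, (Z ⁻¹' S).indicator (fun ω => A.indicator (fun _ => (1:ℝ)) ω - Z ω) ω ∂μ = 0 := by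
  have hf : Integrable (A.indicator (fun _ => (1:ℝ))) μ := (integrable_const _).indicator hA
  have hZi : Integrable Z μ := integrable_condExp.congr h.symm
  refine ⟨(hf.sub hZi).indicator (hZ hS), ?_⟩
  rw [integral_indicator (hZ hS), integral_sub hf.integrableOn hZi.integrableOn,
    ← setIntegral_condExp hZ.comap_le hf ⟨S, hS, rfl⟩,
    setIntegral_congr_ae (hZ hS) (h.mono fun ω hω _ => hω), sub_self]

/-- The discrepancies in one direction are dominated by the event that `X` and `Y` are close. -/
lemma IsCoherent.upper_bound {Ω : Type*} [MeasurableSpace Ω] {μ : Measure Ω}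
    [IsProbabilityMeasure μ] {X Y : Ω → ℝ} (hXY : IsCoherent μ X Y)
    {δ : ℝ} (hδ0 : 0 < δ) (hδ : δ < 1/2) :
    (1 - δ) * μ.real {ω | 1 - δ ≤ Y ω - X ω} ≤ δ * μ.real {ω | 1 - δ ≤ |Y ω - X ω|}ᶜ := by
  obtain ⟨hX, hY, hX1, hY1, A, hA, hXA, hYA⟩ := hXY
  obtain ⟨iX, eX⟩ := integral_indicator_preimage_sub_eq_zero μ hX hA (measurableSet_Iic (a := δ)) hXA
  obtain ⟨iY, eY⟩ :=
    integral_indicator_preimage_sub_eq_zero μ hY hA (measurableSet_Ici (a := 1 - δ)) hYA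
  have mU : MeasurableSet {ω | 1 - δ ≤ Y ω - X ω} :=
    measurableSet_le measurable_const (hY.sub hX)
  have mG : MeasurableSet {ω | 1 - δ ≤ |Y ω - X ω|}ᶜ :=
    (measurableSet_le measurable_const (by fun_prop)).compl
  have iG := (integrable_const (μ := μ) δ).indicator mG
  have iU := (integrable_const (μ := μ) (1 - δ)).indicator mU
  have key := integral_mono (iY.sub iX) (iG.sub iU) (fun ω => by
    classical
    obtain ⟨hx0, hx1⟩ := hX1 ω
    obtain ⟨hy0, hy1⟩ := hY1 ω
    simp only [Pi.sub_apply, Set.indicator_apply, Set.mem_preimage, Set.mem_Iic, Set.mem_Ici,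
      Set.mem_compl_iff, Set.mem_ofPred_eq, le_abs]
    split_ifs <;> grind)
  simp only [Pi.sub_apply] at key
  rw [integral_sub iY iX, integral_sub iG iU, eX, eY, integral_indicator_const _ mG,
    integral_indicator_const _ mU, smul_eq_mul, smul_eq_mul] at key
  linarith

theorem stmt_7 {Ω : Type*} [MeasurableSpace Ω] (μ : Measure Ω) [IsProbabilityMeasure μ]
    (X Y : Ω → ℝ) (hXY : IsCoherent μ X Y)
    (hXc : (Set.range X).Countable) (hYc : (Set.range Y).Countable)
    (δ : ℝ) (hδ0 : 0 < δ) (hδ : δ < 1/2)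
    (hsep : ∀ x y x' y' : ℝ, 0 < μ {ω | X ω = x ∧ Y ω = y} →
      0 < μ {ω | X ω = x' ∧ Y ω = y'} → 1 - δ ≤ |y - x| → 1 - δ ≤ |y' - x'| →
      (x, y) ≠ (x', y') → x ≠ x' ∧ y ≠ y') :
    (μ {ω | 1 - δ ≤ |Y ω - X ω|}).toReal ≤ 2 * δ / (1 + δ) := by
  have hYX : IsCoherent μ Y X := by
    obtain ⟨hX, hY, hX1, hY1, A, hA, hXA, hYA⟩ := hXY
    exact ⟨hY, hX, hY1, hX1, A, hA, hYA, hXA⟩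
  have h1 := hXY.upper_bound hδ0 hδ
  have h2 := hYX.upper_bound hδ0 hδ
  simp only [abs_sub_comm (X _) (Y _)] at h2
  have hU : μ.real {ω | 1 - δ ≤ |Y ω - X ω|} ≤
      μ.real {ω | 1 - δ ≤ Y ω - X ω} + μ.real {ω | 1 - δ ≤ X ω - Y ω} := by
    refine (measureReal_mono fun ω hω => ?_).trans (measureReal_union_le _ _)
    simpa only [Set.mem_union, Set.mem_ofPred_eq, le_abs, neg_sub] using hω
  have mB : MeasurableSet {ω | 1 - δ ≤ |Y ω - X ω|} := by
    obtain ⟨hX, hY, -⟩ := hXY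
    exact measurableSet_le measurable_const (by fun_prop)
  rw [probReal_compl_eq_one_sub mB] at h1 h2
  change μ.real {ω | 1 - δ ≤ |Y ω - X ω|} ≤ _
  rw [le_div_iff₀ (by linarith)]
  nlinarith
end

section
/- Let (X,Y) be a coherent pair of random variables such that X takes at most two values and Y takes at most two values. Then for every δ ∈ (0, 1/2), P(|X − Y| ≥ 1 − δ) ≤ 2δ/(1 + δ). -/
/-!
Let `X ∈ {a, b}`, `Y ∈ {c, d}`. Only the four joint masses `p` and the masses `q` that `A` occupies
in the four cells matter; coherence says that in each row and column the `q`-mass is the value of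
that row or column times its `p`-mass (`Table`).

Call a cell bad if its row value and column value differ by at least `1 - δ`. In a bad cell with
row value `a`, column value `d` and `a ≤ d - (1 - δ)`, the `A`-part is at most the `A`-mass of its
row and the part outside `A` is at most the mass outside `A` in its column. Adding these gives
`p₂ ≤ a (p₁ + p₂) + (1 - d) (p₂ + p₄)`, where `a + (1 - d) ≤ δ`. A single bad cell thus has mass at
most `δ` (`Table.single`). Two diagonal bad cells give, after summation over both, a total mass `p`
with `p ≤ δ p + 2 δ (1 - p)`, i.e. `p ≤ 2 δ / (1 + δ)` (`Table.diag`). Two bad cells in one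
column have mass at most `δ` by Markov's inequality (`Table.column`), and three bad cells are
impossible, since they would force `P(A) ≤ δ < 1 - δ ≤ P(A)` or the reverse (`Table.three`).
The remaining configurations follow by the symmetries of the table.
-/

open MeasureTheory

/-- The joint law of a coherent pair with row values `a`, `b` and column values `c`, `d`:
`p₁, p₂, p₃, p₄` are the masses of the cells `(a, c)`, `(a, d)`, `(b, c)`, `(b, d)`, and `qᵢ` is the
mass of the event `A` inside the `i`-th cell. -/
structure Table (a b c d p₁ p₂ p₃ p₄ q₁ q₂ q₃ q₄ : ℝ) : Prop where
  ha : 0 ≤ a ∧ a ≤ 1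
  hb : 0 ≤ b ∧ b ≤ 1
  hc : 0 ≤ c ∧ c ≤ 1
  hd : 0 ≤ d ∧ d ≤ 1
  h₁ : 0 ≤ q₁ ∧ q₁ ≤ p₁
  h₂ : 0 ≤ q₂ ∧ q₂ ≤ p₂
  h₃ : 0 ≤ q₃ ∧ q₃ ≤ p₃
  h₄ : 0 ≤ q₄ ∧ q₄ ≤ p₄
  total : p₁ + p₂ + p₃ + p₄ = 1
  rowa : q₁ + q₂ = a * (p₁ + p₂)
  rowb : q₃ + q₄ = b * (p₃ + p₄)
  colc : q₁ + q₃ = c * (p₁ + p₃)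
  cold : q₂ + q₄ = d * (p₂ + p₄)

namespace Table

variable {a b c d p₁ p₂ p₃ p₄ q₁ q₂ q₃ q₄ δ : ℝ}

lemma swapRows (T : Table a b c d p₁ p₂ p₃ p₄ q₁ q₂ q₃ q₄) :
    Table b a c d p₃ p₄ p₁ p₂ q₃ q₄ q₁ q₂ := by
  obtain ⟨ha, hb, hc, hd, h₁, h₂, h₃, h₄, t, r1, r2, r3, r4⟩ := T
  exact ⟨hb, ha, hc, hd, h₃, h₄, h₁, h₂, by linarith, r2, r1, by linarith, by linarith⟩

lemma transpose (T : Table a b c d p₁ p₂ p₃ p₄ q₁ q₂ q₃ q₄) :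
    Table c d a b p₁ p₃ p₂ p₄ q₁ q₃ q₂ q₄ := by
  obtain ⟨ha, hb, hc, hd, h₁, h₂, h₃, h₄, t, r1, r2, r3, r4⟩ := T
  exact ⟨hc, hd, ha, hb, h₁, h₃, h₂, h₄, by linarith, r3, r4, r1, r2⟩

lemma swapCols (T : Table a b c d p₁ p₂ p₃ p₄ q₁ q₂ q₃ q₄) :
    Table a b d c p₂ p₁ p₄ p₃ q₂ q₁ q₄ q₃ :=
  T.transpose.swapRows.transpose

/-- Replacing `A` by its complement. -/
lemma compl (T : Table a b c d p₁ p₂ p₃ p₄ q₁ q₂ q₃ q₄) :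
    Table (1 - a) (1 - b) (1 - c) (1 - d) p₁ p₂ p₃ p₄ (p₁ - q₁) (p₂ - q₂) (p₃ - q₃) (p₄ - q₄) := by
  obtain ⟨ha, hb, hc, hd, h₁, h₂, h₃, h₄, t, r1, r2, r3, r4⟩ := T
  constructor <;> first | constructor <;> linarith | linarith

/-- The basic estimate for a cell whose mass is split into its parts inside and outside `A`. -/
lemma cell_le (T : Table a b c d p₁ p₂ p₃ p₄ q₁ q₂ q₃ q₄) :
    p₂ ≤ a * (p₁ + p₂) + (1 - d) * (p₂ + p₄) := by
  obtain ⟨ha, hb, hc, hd, h₁, h₂, h₃, h₄, t, r1, r2, r3, r4⟩ := T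
  linarith

lemma single_aux (T : Table a b c d p₁ p₂ p₃ p₄ q₁ q₂ q₃ q₄) (h : 1 - δ ≤ d - a) : p₂ ≤ δ := by
  have h0 := T.cell_le
  obtain ⟨ha, hb, hc, hd, h₁, h₂, h₃, h₄, t, -, -, -, -⟩ := T
  have e1 : a * (p₁ + p₂) ≤ a * 1 := mul_le_mul_of_nonneg_left (by linarith) ha.1
  have e2 : (1 - d) * (p₂ + p₄) ≤ (1 - d) * 1 :=
    mul_le_mul_of_nonneg_left (by linarith) (by linarith)
  linarith

lemma single (T : Table a b c d p₁ p₂ p₃ p₄ q₁ q₂ q₃ q₄) (h : 1 - δ ≤ |a - d|) : p₂ ≤ δ := by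
  rcases le_abs'.1 h with h | h
  · exact T.single_aux (by linarith)
  · exact T.compl.single_aux (by linarith)

/-- The mass of `A` is at least `1 - δ` when both column values are, and at most `δ` when both row
values are, so this cannot happen for `δ < 1 / 2`. -/
lemma not_low_high (T : Table a b c d p₁ p₂ p₃ p₄ q₁ q₂ q₃ q₄) (hδ : δ < 1 / 2)
    (ha : a ≤ δ) (hb : b ≤ δ) (hc : 1 - δ ≤ c) (hd : 1 - δ ≤ d) : False := by
  obtain ⟨-, -, -, -, h₁, h₂, h₃, h₄, t, r1, r2, r3, r4⟩ := T
  have e1 : a * (p₁ + p₂) ≤ δ * (p₁ + p₂) := mul_le_mul_of_nonneg_right ha (by linarith)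
  have e2 : b * (p₃ + p₄) ≤ δ * (p₃ + p₄) := mul_le_mul_of_nonneg_right hb (by linarith)
  have e3 : (1 - δ) * (p₁ + p₃) ≤ c * (p₁ + p₃) := mul_le_mul_of_nonneg_right hc (by linarith)
  have e4 : (1 - δ) * (p₂ + p₄) ≤ d * (p₂ + p₄) := mul_le_mul_of_nonneg_right hd (by linarith)
  have e5 : δ * (p₁ + p₂ + p₃ + p₄) = δ := by rw [t, mul_one]
  linarith

lemma diag_aux (T : Table a b c d p₁ p₂ p₃ p₄ q₁ q₂ q₃ q₄)
    (h : 1 - δ ≤ d - a) (h' : 1 - δ ≤ b - c) : (p₂ + p₃) * (1 + δ) ≤ 2 * δ := by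
  have e1 := T.cell_le
  have e2 := T.transpose.cell_le
  obtain ⟨ha, hb, hc, hd, h₁, h₂, h₃, h₄, t, -, -, -, -⟩ := T
  have f1 : (a + (1 - d)) * p₂ ≤ δ * p₂ := mul_le_mul_of_nonneg_right (by linarith) (by linarith)
  have f2 : (c + (1 - b)) * p₃ ≤ δ * p₃ := mul_le_mul_of_nonneg_right (by linarith) (by linarith)
  have f3 : (a + c) * p₁ ≤ (a + c) * (p₁ + p₄) :=
    mul_le_mul_of_nonneg_left (by linarith) (by linarith)
  have f4 : (2 - b - d) * p₄ ≤ (2 - b - d) * (p₁ + p₄) :=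
    mul_le_mul_of_nonneg_left (by linarith) (by linarith)
  have f5 : (a + c + (2 - b - d)) * (p₁ + p₄) ≤ 2 * δ * (p₁ + p₄) :=
    mul_le_mul_of_nonneg_right (by linarith) (by linarith)
  have f6 : δ * (p₁ + p₂ + p₃ + p₄) = δ := by rw [t, mul_one]
  linarith

lemma diag (T : Table a b c d p₁ p₂ p₃ p₄ q₁ q₂ q₃ q₄) (hδ0 : 0 < δ) (hδ : δ < 1 / 2)
    (h : 1 - δ ≤ |a - d|) (h' : 1 - δ ≤ |b - c|) : p₂ + p₃ ≤ 2 * δ / (1 + δ) := by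
  rw [le_div_iff₀ (by linarith)]
  have := T.ha; have := T.hb; have := T.hc; have := T.hd
  rcases le_abs'.1 h with h | h <;> rcases le_abs'.1 h' with h' | h'
  · exact (T.not_low_high hδ (by linarith) (by linarith) (by linarith) (by linarith)).elim
  · exact T.diag_aux (by linarith) (by linarith)
  · exact T.compl.diag_aux (by linarith) (by linarith)
  · exact (T.compl.not_low_high hδ (by linarith) (by linarith) (by linarith) (by linarith)).elim

lemma column_aux (T : Table a b c d p₁ p₂ p₃ p₄ q₁ q₂ q₃ q₄) (hδ : δ < 1 / 2)
    (h : 1 - δ ≤ d - a) (h' : 1 - δ ≤ d - b) : p₂ + p₄ ≤ δ := by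
  obtain ⟨ha, hb, hc, hd, h₁, h₂, h₃, h₄, t, r1, r2, r3, r4⟩ := T
  have e1 : a * (p₁ + p₂) ≤ (d - 1 + δ) * (p₁ + p₂) :=
    mul_le_mul_of_nonneg_right (by linarith) (by linarith)
  have e2 : b * (p₃ + p₄) ≤ (d - 1 + δ) * (p₃ + p₄) :=
    mul_le_mul_of_nonneg_right (by linarith) (by linarith)
  have e3 : (d - 1 + δ) * (p₁ + p₂ + p₃ + p₄) = d - 1 + δ := by rw [t, mul_one]
  -- Both row values are at most `d - 1 + δ`, hence so is `P(A) ≥ d * P(Y = d)`;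
  -- finally `d - 1 + δ ≤ d * δ` because `d ≤ 1`.
  have e4 : d * (p₂ + p₄) ≤ d - 1 + δ := by linarith
  have e5 : 0 ≤ (1 - d) * (1 - δ) := mul_nonneg (by linarith) (by linarith)
  exact le_of_mul_le_mul_left (by linarith) (show 0 < d by linarith)

lemma column (T : Table a b c d p₁ p₂ p₃ p₄ q₁ q₂ q₃ q₄) (hδ : δ < 1 / 2)
    (h : 1 - δ ≤ |a - d|) (h' : 1 - δ ≤ |b - d|) : p₂ + p₄ ≤ δ := by
  have := T.ha; have := T.hb; have := T.hc; have := T.hd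
  rcases le_abs'.1 h with h | h <;> rcases le_abs'.1 h' with h' | h'
  · exact T.column_aux hδ (by linarith) (by linarith)
  · linarith
  · linarith
  · exact T.compl.column_aux hδ (by linarith) (by linarith)

lemma three (T : Table a b c d p₁ p₂ p₃ p₄ q₁ q₂ q₃ q₄) (hδ : δ < 1 / 2)
    (h : 1 - δ ≤ |a - d|) (h' : 1 - δ ≤ |b - d|) (h'' : 1 - δ ≤ |a - c|) : False := by
  have := T.ha; have := T.hb; have := T.hc; have := T.hd
  rcases le_abs'.1 h with h | h <;> rcases le_abs'.1 h' with h' | h' <;>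
    rcases le_abs'.1 h'' with h'' | h'' <;> try linarith
  · exact T.not_low_high hδ (by linarith) (by linarith) (by linarith) (by linarith)
  · exact T.compl.not_low_high hδ (by linarith) (by linarith) (by linarith) (by linarith)

open Classical in
/-- The total mass of the bad cells. -/
lemma bad_le (T : Table a b c d p₁ p₂ p₃ p₄ q₁ q₂ q₃ q₄) (hδ0 : 0 < δ) (hδ : δ < 1 / 2) :
    (if 1 - δ ≤ |a - c| then p₁ else 0) + (if 1 - δ ≤ |a - d| then p₂ else 0) +
      (if 1 - δ ≤ |b - c| then p₃ else 0) + (if 1 - δ ≤ |b - d| then p₄ else 0)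
      ≤ 2 * δ / (1 + δ) := by
  have hle : δ ≤ 2 * δ / (1 + δ) := by
    rw [le_div_iff₀ (by linarith)]
    nlinarith
  by_cases k1 : 1 - δ ≤ |a - c| <;> by_cases k2 : 1 - δ ≤ |a - d| <;>
    by_cases k3 : 1 - δ ≤ |b - c| <;> by_cases k4 : 1 - δ ≤ |b - d| <;>
    simp only [k1, k2, k3, k4, if_true, if_false]
  · exact (T.three hδ k2 k4 k1).elim
  · exact (T.swapCols.three hδ k1 k3 k2).elim
  · exact (T.three hδ k2 k4 k1).elim
  · have := T.transpose.swapCols.column hδ (by rwa [abs_sub_comm])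
      (by rwa [abs_sub_comm])
    linarith
  · exact (T.swapRows.swapCols.three hδ k3 k1 k4).elim
  · have := T.swapCols.column hδ k1 k3
    linarith
  · have := T.swapCols.diag hδ0 hδ k1 k4
    linarith
  · have := T.swapCols.single k1
    linarith
  · exact (T.swapRows.three hδ k4 k2 k3).elim
  · have := T.diag hδ0 hδ k2 k3
    linarith
  · have := T.column hδ k2 k4
    linarith
  · have := T.single k2
    linarith
  · have := T.transpose.column hδ (by rwa [abs_sub_comm]) (by rwa [abs_sub_comm])
    linarith
  · have := T.swapRows.swapCols.single k3
    linarith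
  · have := T.swapRows.single k4
    linarith
  · linarith

end Table

/-- On a `σ(Z)`-measurable set where `Z` is the constant `z`, the conditional probability `Z` of
`A` is an ordinary conditional probability. -/
lemma measureReal_inter_of_condExp {Ω : Type*} [MeasurableSpace Ω] {μ : Measure Ω}
    [IsProbabilityMeasure μ] {Z : Ω → ℝ} (hZ : Measurable Z) {A : Set Ω} (hA : MeasurableSet A)
    (h : Z =ᵐ[μ] μ[A.indicator (fun _ => (1:ℝ)) | MeasurableSpace.comap Z inferInstance])
    {S : Set ℝ} (hS : MeasurableSet S) {z : ℝ} (hz : ∀ ω, Z ω ∈ S → Z ω = z) :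
    μ.real (A ∩ Z ⁻¹' S) = z * μ.real (Z ⁻¹' S) := by
  have hint : Integrable (A.indicator (fun _ => (1:ℝ))) μ :=
    (integrable_const (1:ℝ)).indicator hA
  have h1 := setIntegral_condExp (μ := μ) hZ.comap_le hint
    (s := Z ⁻¹' S) ⟨S, hS, rfl⟩
  have h2 : ∫ ω in Z ⁻¹' S, Z ω ∂μ = z * μ.real (Z ⁻¹' S) := by
    rw [setIntegral_congr_fun (hZ hS) (g := fun _ => z) (fun ω hω => hz ω hω)]
    simp [mul_comm]
  have h3 : ∫ ω in Z ⁻¹' S, A.indicator (fun _ => (1:ℝ)) ω ∂μ = μ.real (A ∩ Z ⁻¹' S) := by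
    rw [integral_indicator hA]
    simp [Measure.restrict_apply, hA, measureReal_def]
  rw [← h3, ← h1, ← h2]
  exact setIntegral_congr_ae (hZ hS) (h.symm.mono fun ω hω _ => hω)

theorem stmt_8 {Ω : Type*} [MeasurableSpace Ω] (μ : Measure Ω) [IsProbabilityMeasure μ]
    (X Y : Ω → ℝ) (hXY : IsCoherent μ X Y)
    (hX2 : ∃ a b : ℝ, ∀ ω, X ω = a ∨ X ω = b) (hY2 : ∃ c d : ℝ, ∀ ω, Y ω = c ∨ Y ω = d)
    (δ : ℝ) (hδ0 : 0 < δ) (hδ : δ < 1/2) :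
    (μ {ω | 1 - δ ≤ |X ω - Y ω|}).toReal ≤ 2 * δ / (1 + δ) := by
  classical
  obtain ⟨hX, hY, hX01, hY01, A, hA, hXA, hYA⟩ := hXY
  obtain ⟨ω₀⟩ : Nonempty Ω := nonempty_of_isProbabilityMeasure μ
  -- Listed values that are not attained can be replaced by attained ones, so that all of them
  -- lie in `[0, 1]`.
  have key : ∀ Z : Ω → ℝ, (∀ ω, Z ω ∈ Set.Icc (0:ℝ) 1) → (∃ a b : ℝ, ∀ ω, Z ω = a ∨ Z ω = b) →
      ∃ a b : ℝ, (0 ≤ a ∧ a ≤ 1) ∧ (0 ≤ b ∧ b ≤ 1) ∧ ∀ ω, Z ω ∈ ({a} : Set ℝ)ᶜ → Z ω = b := by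
    rintro Z hZ ⟨a, b, hab⟩
    by_cases hex : ∃ ω, Z ω ≠ Z ω₀
    · obtain ⟨ω₁, h1⟩ := hex
      refine ⟨Z ω₀, Z ω₁, hZ ω₀, hZ ω₁, fun ω hω => ?_⟩
      have hω : Z ω ≠ Z ω₀ := hω
      rcases hab ω with h | h <;> rcases hab ω₀ with h' | h' <;> rcases hab ω₁ with h'' | h'' <;>
        simp_all
    · push Not at hex
      exact ⟨Z ω₀, Z ω₀, hZ ω₀, hZ ω₀, fun ω _ => hex ω⟩
  obtain ⟨a, b, ha, hb, hab⟩ := key X hX01 hX2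
  obtain ⟨c, d, hc, hd, hcd⟩ := key Y hY01 hY2
  have ma : MeasurableSet ({a} : Set ℝ) := measurableSet_singleton a
  have mc : MeasurableSet ({c} : Set ℝ) := measurableSet_singleton c
  set E := X ⁻¹' {a} with hE
  set F := Y ⁻¹' {c} with hF
  have mE : MeasurableSet E := hX ma
  have mF : MeasurableSet F := hY mc
  have ra := measureReal_inter_of_condExp hX hA hXA ma (z := a) (fun ω h => h)
  have rb := measureReal_inter_of_condExp hX hA hXA ma.compl hab
  have rc := measureReal_inter_of_condExp hY hA hYA mc (z := c) (fun ω h => h)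
  have rd := measureReal_inter_of_condExp hY hA hYA mc.compl hcd
  rw [Set.preimage_compl] at rb rd
  rw [← hE] at ra rb
  rw [← hF] at rc rd
  have split : ∀ S G : Set Ω, MeasurableSet G → μ.real (S ∩ G) + μ.real (S ∩ Gᶜ) = μ.real S := by
    intro S G hG
    rw [← Set.sdiff_eq]
    exact measureReal_inter_add_sdiff hG
  have cm : ∀ S : Set Ω, μ.real (S ∩ F) = μ.real (F ∩ S) ∧ μ.real (S ∩ Fᶜ) = μ.real (Fᶜ ∩ S) :=
    fun S => ⟨by rw [Set.inter_comm], by rw [Set.inter_comm]⟩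
  have T : Table a b c d (μ.real (E ∩ F)) (μ.real (E ∩ Fᶜ)) (μ.real (Eᶜ ∩ F))
      (μ.real (Eᶜ ∩ Fᶜ)) (μ.real (A ∩ E ∩ F)) (μ.real (A ∩ E ∩ Fᶜ)) (μ.real (A ∩ Eᶜ ∩ F))
      (μ.real (A ∩ Eᶜ ∩ Fᶜ)) := by
    refine ⟨ha, hb, hc, hd, ⟨measureReal_nonneg, measureReal_mono ?_⟩,
      ⟨measureReal_nonneg, measureReal_mono ?_⟩, ⟨measureReal_nonneg, measureReal_mono ?_⟩,
      ⟨measureReal_nonneg, measureReal_mono ?_⟩, ?_, ?_, ?_, ?_, ?_⟩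
    iterate 4 exact Set.inter_subset_inter_left _ Set.inter_subset_right
    · have h1 := split E F mF
      have h2 := split Eᶜ F mF
      have h3 := split Set.univ E mE
      simp only [Set.univ_inter, probReal_univ] at h3
      linarith
    · rw [split _ F mF, split _ F mF, ra]
    · rw [split _ F mF, split _ F mF, rb]
    · rw [Set.inter_right_comm A E F, Set.inter_right_comm A Eᶜ F, split _ E mE, rc,
        (cm E).1, (cm Eᶜ).1, split _ E mE]
    · rw [Set.inter_right_comm A E Fᶜ, Set.inter_right_comm A Eᶜ Fᶜ, split _ E mE, rd,
        (cm E).2, (cm Eᶜ).2, split _ E mE]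
  refine le_trans ?_ (T.bad_le hδ0 hδ)
  set B := {ω | 1 - δ ≤ |X ω - Y ω|} with hB
  have cell : ∀ (G : Set Ω) (x y : ℝ), (∀ ω ∈ G, X ω = x ∧ Y ω = y) →
      μ.real (B ∩ G) ≤ if 1 - δ ≤ |x - y| then μ.real G else 0 := by
    intro G x y hG
    split_ifs with hxy
    · exact measureReal_mono Set.inter_subset_right
    · have : B ∩ G = ∅ := by
        ext ω
        simp only [Set.mem_inter_iff, Set.mem_empty_iff_false, iff_false]
        rintro ⟨h1, h2⟩
        obtain ⟨rfl, rfl⟩ := hG ω h2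
        exact hxy h1
      simp [this]
  have k1 := cell (E ∩ F) a c fun ω h => ⟨h.1, h.2⟩
  have k2 := cell (E ∩ Fᶜ) a d fun ω h => ⟨h.1, hcd ω h.2⟩
  have k3 := cell (Eᶜ ∩ F) b c fun ω h => ⟨hab ω h.1, h.2⟩
  have k4 := cell (Eᶜ ∩ Fᶜ) b d fun ω h => ⟨hab ω h.1, hcd ω h.2⟩
  have s1 := split B E mE
  have s2 := split (B ∩ E) F mF
  have s3 := split (B ∩ Eᶜ) F mF
  simp only [Set.inter_assoc] at s2 s3
  change μ.real B ≤ _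
  linarith
end

section
/- For every δ ∈ (0,1) there exists a probability space and a coherent pair of random variables (X,Y) on it, with each of X and Y taking at most two values, such that P(|X − Y| ≥ 1 − δ) = 2δ/(1 + δ). (Such a pair is given by the distribution on the three points (1−δ, 1−δ), (0, 1−δ), (1−δ, 0) with probabilities (1−δ)/(1+δ), δ/(1+δ), δ/(1+δ) respectively, taking A to be the event {X = Y}.) -/
/-!
The pair lives on the three-point space `Fin 3`, with masses `(1-δ)/(1+δ)`, `δ/(1+δ)`, `δ/(1+δ)`,
where `(X, Y)` takes the values `(1-δ, 1-δ)`, `(0, 1-δ)`, `(1-δ, 0)`, and `A = {0}` is the event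
`X = Y`. The event `{X = 1-δ}` has probability `1/(1+δ)`, of which a fraction `1-δ` lies in `A`,
while `{X = 0}` misses `A`; hence `X = P(A | X)`, and symmetrically for `Y`. Finally
`|X - Y| ≥ 1-δ` holds exactly at the last two points, of total mass `2δ/(1+δ)`.

`ae_eq_condExp_discreteMeasure` reduces the conditional-expectation identities to finite sums.
-/

open MeasureTheory

/-- The measure on `Fin 3` giving mass `w i` to the point `i` (negative weights count as `0`). -/
noncomputable def discreteMeasure (w : Fin 3 → ℝ) : Measure (Fin 3) :=
  ∑ i, ENNReal.ofReal (w i) • Measure.dirac i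

instance (w : Fin 3 → ℝ) : IsFiniteMeasure (discreteMeasure w) :=
  ⟨by simp [discreteMeasure, Fin.sum_univ_three]⟩

lemma setIntegral_discreteMeasure (w : Fin 3 → ℝ) (hw : ∀ i, 0 ≤ w i) (s : Set (Fin 3))
    (f : Fin 3 → ℝ) :
    ∫ i in s, f i ∂(discreteMeasure w) = ∑ i, w i * s.indicator f i := by
  rw [← integral_indicator (MeasurableSet.of_discrete), discreteMeasure,
    integral_finsetSum_measure]
  · simp [integral_smul_measure, ENNReal.toReal_ofReal, hw]
  · intro i _
    exact (integrable_dirac (by simp)).smul_measure ENNReal.ofReal_ne_top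

/-- On the three-point space, `X = E[Z | σ(X)]` follows from the averaging identity over the
events `X ⁻¹' t`. -/
lemma ae_eq_condExp_discreteMeasure (w : Fin 3 → ℝ) (hw : ∀ i, 0 ≤ w i) (X Z : Fin 3 → ℝ)
    (h : ∀ t : Set ℝ, ∑ i, w i * (X ⁻¹' t).indicator X i = ∑ i, w i * (X ⁻¹' t).indicator Z i) :
    X =ᵐ[discreteMeasure w] (discreteMeasure w)[Z | MeasurableSpace.comap X inferInstance] := by
  have hm : MeasurableSpace.comap X inferInstance ≤ (inferInstance : MeasurableSpace (Fin 3)) :=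
    (Measurable.of_discrete : Measurable X).comap_le
  refine ae_eq_condExp_of_forall_setIntegral_eq hm .of_finite
    (fun _ _ _ => Integrable.of_finite.integrableOn) ?_ ?_
  · rintro _ ⟨t, _, rfl⟩ _
    rw [setIntegral_discreteMeasure w hw, setIntegral_discreteMeasure w hw, h]
  · exact (comap_measurable X).stronglyMeasurable.aestronglyMeasurable

theorem stmt_9 (δ : ℝ) (hδ0 : 0 < δ) (hδ1 : δ < 1) :
    ∃ (Ω : Type) (_ : MeasurableSpace Ω) (μ : Measure Ω) (_ : IsProbabilityMeasure μ)
      (X Y : Ω → ℝ), IsCoherent μ X Y ∧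
      (∃ a b : ℝ, ∀ ω, X ω = a ∨ X ω = b) ∧ (∃ c d : ℝ, ∀ ω, Y ω = c ∨ Y ω = d) ∧
      (μ {ω | 1 - δ ≤ |X ω - Y ω|}).toReal = 2 * δ / (1 + δ) := by
  have hp : 0 ≤ (1 - δ) / (1 + δ) := div_nonneg (by linarith) (by linarith)
  have hq : 0 ≤ δ / (1 + δ) := by positivity
  have hne : 1 + δ ≠ 0 := by positivity
  have hw : ∀ i, 0 ≤ (![(1 - δ) / (1 + δ), δ / (1 + δ), δ / (1 + δ)] : Fin 3 → ℝ) i := by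
    intro i; fin_cases i <;> simp [hp, hq]
  refine ⟨Fin 3, inferInstance,
    discreteMeasure ![(1 - δ) / (1 + δ), δ / (1 + δ), δ / (1 + δ)], ⟨?_⟩,
    ![1 - δ, 0, 1 - δ], ![1 - δ, 1 - δ, 0],
    ⟨.of_discrete, .of_discrete, ?_, ?_, {0}, .of_discrete, ?_, ?_⟩,
    ⟨1 - δ, 0, ?_⟩, ⟨1 - δ, 0, ?_⟩, ?_⟩
  · simp only [discreteMeasure, Fin.sum_univ_three, Measure.add_apply, Measure.smul_apply,
      measure_univ, smul_eq_mul, mul_one, Matrix.cons_val]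
    rw [← ENNReal.ofReal_add hp hq, ← ENNReal.ofReal_add (by positivity) hq,
      ENNReal.ofReal_eq_one]
    field_simp
    ring
  · intro i; fin_cases i <;> simp <;> constructor <;> linarith
  · intro i; fin_cases i <;> simp <;> constructor <;> linarith
  · refine ae_eq_condExp_discreteMeasure _ hw _ _ fun t => ?_
    by_cases h1 : 1 - δ ∈ t <;> by_cases h0 : (0 : ℝ) ∈ t <;>
      simp [Fin.sum_univ_three, Set.indicator, h1, h0] <;> field_simp <;> ring
  · refine ae_eq_condExp_discreteMeasure _ hw _ _ fun t => ?_
    by_cases h1 : 1 - δ ∈ t <;> by_cases h0 : (0 : ℝ) ∈ t <;>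
      simp [Fin.sum_univ_three, Set.indicator, h1, h0] <;> field_simp <;> ring
  · intro i; fin_cases i <;> simp
  · intro i; fin_cases i <;> simp
  · have habs : |1 - δ| = 1 - δ := abs_of_pos (by linarith)
    have habs' : |δ - 1| = 1 - δ := by rw [abs_sub_comm, habs]
    simp only [discreteMeasure, Fin.sum_univ_three, Measure.add_apply, Measure.smul_apply,
      Measure.dirac_apply, Set.indicator, smul_eq_mul]
    simp [habs, habs', not_le.mpr hδ1]
    rw [← ENNReal.ofReal_add hq hq, ENNReal.toReal_ofReal (by positivity)]
    ring
end

section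
/- Let X and Y be real-valued random variables on a probability space (Ω,F,P). Suppose there exist disjoint intervals G and H in ℝ and Borel sets G′ ⊆ G and H′ ⊆ H such that the events {X ∈ G′} and {Y ∈ H′} are almost surely identical and P(X ∈ G′) > 0. Then there is no integrable random variable Z with X = E[Z | σ(X)] almost surely and Y = E[Z | σ(Y)] almost surely. -/
open MeasureTheory

/-! Put `A = {X ∈ G'}`, which is almost surely `{Y ∈ H'}`. As `A ∈ σ(X)` and, up to a null set,
`A ∈ σ(Y)`, any such `Z` would give `∫_A X = ∫_A Z = ∫_A Y`. But disjoint intervals are strictly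
ordered (`ordConnected_separated`), so `X - Y` has a constant strict sign almost everywhere on
`A`, and equality of the integrals forces `μ A = 0` (`measure_zero_of_ae_lt`). -/

lemma ordConnected_separated {G H : Set ℝ} (hG : G.OrdConnected) (hH : H.OrdConnected)
    (hGH : Disjoint G H) :
    (∀ g ∈ G, ∀ h ∈ H, g < h) ∨ (∀ g ∈ G, ∀ h ∈ H, h < g) := by
  by_contra! hcon
  obtain ⟨⟨g₁, hg₁, h₁, hh₁, h1⟩, ⟨g₂, hg₂, h₂, hh₂, h2⟩⟩ := hcon
  rcases le_total h₁ g₂ with h | h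
  · exact Set.disjoint_left.1 hGH hg₂ (hH.out hh₁ hh₂ ⟨h, h2⟩)
  · exact Set.disjoint_left.1 hGH (hG.out hg₂ hg₁ ⟨h, h1⟩) hh₁

lemma measure_zero_of_ae_lt {Ω : Type*} [MeasurableSpace Ω] {μ : Measure Ω} {U V : Ω → ℝ}
    {A : Set Ω} (hU : Integrable U μ) (hV : Integrable V μ)
    (hlt : ∀ᵐ ω ∂μ.restrict A, U ω < V ω)
    (heq : ∫ ω in A, U ω ∂μ = ∫ ω in A, V ω ∂μ) : μ A = 0 := by
  have h0 : ∫ ω in A, (V - U) ω ∂μ = 0 := by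
    simp only [Pi.sub_apply]
    rw [integral_sub hV.integrableOn hU.integrableOn, heq, sub_self]
  have hnn : 0 ≤ᵐ[μ.restrict A] (V - U) := by
    filter_upwards [hlt] with ω hω
    simpa using hω.le
  have hz := (integral_eq_zero_iff_of_nonneg_ae hnn (hV.sub hU).integrableOn).1 h0
  have hF : ∀ᵐ _ ∂μ.restrict A, False := by
    filter_upwards [hlt, hz] with ω h1 h2
    simp only [Pi.sub_apply, Pi.zero_apply] at h2
    linarith
  simpa [Filter.eventually_false_iff_eq_bot] using hF

/-- Defining property of `X = E[Z | σ(X)]`, tested on an event of `σ(X)`. -/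
lemma setIntegral_eq_of_condExp {Ω : Type*} [MeasurableSpace Ω] {μ : Measure Ω}
    [IsProbabilityMeasure μ] {X Z : Ω → ℝ} (hX : Measurable X) (hZ : Integrable Z μ)
    (hXZ : X =ᵐ[μ] μ[Z | MeasurableSpace.comap X inferInstance])
    {S : Set ℝ} (hS : MeasurableSet S) :
    ∫ ω in {ω | X ω ∈ S}, X ω ∂μ = ∫ ω in {ω | X ω ∈ S}, Z ω ∂μ := by
  rw [← setIntegral_condExp (s := {ω | X ω ∈ S}) hX.comap_le hZ ⟨S, hS, rfl⟩]
  exact integral_congr_ae (ae_restrict_of_ae hXZ)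

theorem stmt_11 {Ω : Type*} [MeasurableSpace Ω] (μ : Measure Ω) [IsProbabilityMeasure μ]
    (X Y : Ω → ℝ) (hX : Measurable X) (hY : Measurable Y)
    (G H G' H' : Set ℝ) (hGint : G.OrdConnected) (hHint : H.OrdConnected)
    (hGH : Disjoint G H) (hG' : MeasurableSet G') (hH' : MeasurableSet H')
    (hG'G : G' ⊆ G) (hH'H : H' ⊆ H)
    (hsame : {ω | X ω ∈ G'} =ᵐ[μ] {ω | Y ω ∈ H'})
    (hpos : 0 < μ {ω | X ω ∈ G'}) :
    ¬ ∃ Z : Ω → ℝ, Integrable Z μ ∧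
        X =ᵐ[μ] μ[Z | MeasurableSpace.comap X inferInstance] ∧
        Y =ᵐ[μ] μ[Z | MeasurableSpace.comap Y inferInstance] := by
  rintro ⟨Z, hZ, hXZ, hYZ⟩
  have hXi : Integrable X μ := integrable_condExp.congr hXZ.symm
  have hYi : Integrable Y μ := integrable_condExp.congr hYZ.symm
  have heq : ∫ ω in {ω | X ω ∈ G'}, X ω ∂μ = ∫ ω in {ω | X ω ∈ G'}, Y ω ∂μ := by
    rw [setIntegral_eq_of_condExp hX hZ hXZ hG', setIntegral_congr_set hsame,
      setIntegral_congr_set hsame, setIntegral_eq_of_condExp hY hZ hYZ hH']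
  have hmem : ∀ᵐ ω ∂μ.restrict {ω | X ω ∈ G'}, X ω ∈ G ∧ Y ω ∈ H := by
    have hXG : ∀ᵐ ω ∂μ.restrict {ω | X ω ∈ G'}, X ω ∈ G' := ae_restrict_mem (hX hG')
    have hYH : ∀ᵐ ω ∂μ.restrict {ω | X ω ∈ G'}, Y ω ∈ H' := by
      rw [Measure.restrict_congr_set hsame]
      exact ae_restrict_mem (hY hH')
    filter_upwards [hXG, hYH] with ω h1 h2
    exact ⟨hG'G h1, hH'H h2⟩
  rcases ordConnected_separated hGint hHint hGH with h | h
  · exact hpos.ne' (measure_zero_of_ae_lt hXi hYi (hmem.mono fun ω hω => h _ hω.1 _ hω.2) heq)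
  · exact hpos.ne'
      (measure_zero_of_ae_lt hYi hXi (hmem.mono fun ω hω => h _ hω.1 _ hω.2) heq.symm)
end

section
/- Let X and Y be random variables with values in [0,1], and let 0 ≤ a ≤ b ≤ 1. If P((X − a)(Y − b) < 0) = 1 and P(Y > b) > 0, then the pair (X,Y) is not coherent. -/
/-!
Almost surely either `X < a` and `b < Y`, or `a < X` and `Y < b`, so the events
`S = {Y > b}` and `T = {X < a}` agree up to a null set. If `A` witnesses coherence, then
`T ∈ σ(X)` and `S ∈ σ(Y)` give `∫_T X = P(A ∩ T) = P(A ∩ S) = ∫_S Y`, hence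
`∫_S (Y - X) = 0`. But `X < a ≤ b < Y` almost surely on `S`, so this forces `P(S) = 0`.
-/

open MeasureTheory

theorem stmt_12 {Ω : Type*} [MeasurableSpace Ω] (μ : Measure Ω) [IsProbabilityMeasure μ]
    (X Y : Ω → ℝ) (hX : Measurable X) (hY : Measurable Y)
    (hX01 : ∀ ω, X ω ∈ Set.Icc (0:ℝ) 1) (hY01 : ∀ ω, Y ω ∈ Set.Icc (0:ℝ) 1)
    (a b : ℝ) (ha : 0 ≤ a) (hab : a ≤ b) (hb : b ≤ 1)
    (hneg : μ {ω | (X ω - a) * (Y ω - b) < 0} = 1)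
    (hpos : 0 < μ {ω | b < Y ω}) :
    ¬ IsCoherent μ X Y := by
  rintro ⟨-, -, -, -, A, hA, hXA, hYA⟩
  set S : Set Ω := {ω | b < Y ω} with hS
  set T : Set Ω := {ω | X ω < a} with hT
  have hSm : MeasurableSet S := measurableSet_lt measurable_const hY
  have hae : ∀ᵐ ω ∂μ, (X ω - a) * (Y ω - b) < 0 :=
    (prob_compl_eq_zero_iff (measurableSet_lt ((hX.sub_const a).mul (hY.sub_const b))
      measurable_const)).2 hneg
  have hiff : ∀ᵐ ω ∂μ, b < Y ω ↔ X ω < a := by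
    filter_upwards [hae] with ω h
    rcases mul_neg_iff.1 h with ⟨h1, h2⟩ | ⟨h1, h2⟩
    · exact ⟨fun _ => by linarith, fun _ => by linarith⟩
    · exact ⟨fun _ => by linarith, fun _ => by linarith⟩
  have hST : S =ᵐ[μ] T := by
    filter_upwards [hiff] with ω h
    exact propext h
  have hXint : Integrable X μ := integrable_condExp.congr hXA.symm
  have hYint : Integrable Y μ := integrable_condExp.congr hYA.symm
  have hAint : Integrable (A.indicator (fun _ => (1:ℝ))) μ :=
    (integrable_const (1:ℝ)).indicator hA
  have hXT : ∫ ω in T, X ω ∂μ = ∫ ω in T, A.indicator (fun _ => (1:ℝ)) ω ∂μ := by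
    rw [← setIntegral_condExp (s := T) hX.comap_le hAint ⟨Set.Iio a, measurableSet_Iio, rfl⟩]
    exact integral_congr_ae (ae_restrict_of_ae hXA)
  have hYS : ∫ ω in S, Y ω ∂μ = ∫ ω in S, A.indicator (fun _ => (1:ℝ)) ω ∂μ := by
    rw [← setIntegral_condExp (s := S) hY.comap_le hAint ⟨Set.Ioi b, measurableSet_Ioi, rfl⟩]
    exact integral_congr_ae (ae_restrict_of_ae hYA)
  have hzero : ∫ ω in S, (Y ω - X ω) ∂μ = 0 := by
    rw [integral_sub hYint.integrableOn hXint.integrableOn, hYS, setIntegral_congr_set hST,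
      setIntegral_congr_set hST, hXT, sub_self]
  have hlt : ∀ᵐ ω ∂μ.restrict S, 0 < Y ω - X ω := by
    filter_upwards [ae_restrict_mem hSm, ae_restrict_of_ae hiff] with ω h1 h2
    have h3 : b < Y ω := h1
    linarith [h2.1 h3]
  have hae0 := (integral_eq_zero_iff_of_nonneg_ae (hlt.mono fun ω h => h.le)
    (hYint.sub hXint).integrableOn).1 hzero
  have hfalse : ∀ᵐ ω ∂μ.restrict S, False := by
    filter_upwards [hlt, hae0] with ω h1 h2
    exact h1.ne' h2
  have : μ.restrict S = 0 := ae_eq_bot.1 (Filter.eventually_false_iff_eq_bot.1 hfalse)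
  exact hpos.ne' (Measure.restrict_eq_zero.1 this)
end

section
/- Let (X,Y) be a coherent pair of random variables with Var(X) > 0 and Var(Y) > 0. Then the correlation of X and Y is not equal to −1; that is, Cov(X,Y) ≠ −√(Var(X) · Var(Y)). -/
/-!
If `X` is a version of `P(A | σ(X))`, then `Cov(X, 1_A) = Var(X)`, and likewise for `Y`
(`covariance_indicator_eq_variance`). Put `s = √Var(X)`, `t = √Var(Y)` and `Z = t X + s Y`.
A correlation of `-1` means `Cov(X, Y) = -s t`, which forces `Var(Z) = 0`, so `Z` is almost
surely constant and `Cov(Z, 1_A) = 0`. But `Cov(Z, 1_A) = t Var(X) + s Var(Y) > 0`.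
-/

open MeasureTheory

open ProbabilityTheory in
/-- A conditional probability of `A` given itself is the orthogonal projection of `1_A`, so its
covariance with `1_A` is its own variance. -/
lemma covariance_indicator_eq_variance {Ω : Type*} [MeasurableSpace Ω] {μ : Measure Ω}
    [IsProbabilityMeasure μ] {X : Ω → ℝ} {A : Set Ω} (hX : Measurable X) (hX2 : MemLp X 2 μ)
    (hA : MeasurableSet A)
    (h : X =ᵐ[μ] μ[A.indicator (fun _ => (1:ℝ)) | MeasurableSpace.comap X inferInstance]) :
    cov[X, A.indicator (fun _ => (1:ℝ)); μ] = Var[X; μ] := by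
  have hI : MemLp (A.indicator (fun _ => (1:ℝ))) 2 μ := (memLp_const 1).indicator hA
  have hm := hX.comap_le
  have hmean : ∫ ω, X ω ∂μ = ∫ ω, A.indicator (fun _ => (1:ℝ)) ω ∂μ :=
    (integral_congr_ae h).trans (integral_condExp hm)
  have hpull : μ[X * A.indicator (fun _ => (1:ℝ)) | MeasurableSpace.comap X inferInstance]
      =ᵐ[μ] X * μ[A.indicator (fun _ => (1:ℝ)) | MeasurableSpace.comap X inferInstance] :=
    condExp_mul_of_stronglyMeasurable_left (comap_measurable X).stronglyMeasurable
      (hX2.integrable_mul hI) (hI.integrable (by norm_num))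
  have hmul : ∫ ω, (X * A.indicator (fun _ => (1:ℝ))) ω ∂μ = ∫ ω, (X * X) ω ∂μ := by
    rw [← integral_condExp hm]
    refine integral_congr_ae ?_
    filter_upwards [hpull, h] with ω h1 h2
    rw [h1, Pi.mul_apply, Pi.mul_apply, ← h2]
  rw [← covariance_self hX.aemeasurable, covariance_eq_sub hX2 hI, covariance_eq_sub hX2 hX2,
    hmul, ← hmean]

open ProbabilityTheory in
theorem stmt_14 {Ω : Type*} [MeasurableSpace Ω] (μ : Measure Ω) [IsProbabilityMeasure μ]
    (X Y : Ω → ℝ) (hXY : IsCoherent μ X Y)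
    (hVX : 0 < variance X μ) (hVY : 0 < variance Y μ) :
    (∫ ω, X ω * Y ω ∂μ) - (∫ ω, X ω ∂μ) * (∫ ω, Y ω ∂μ) ≠
      - Real.sqrt (variance X μ * variance Y μ) := by
  obtain ⟨hX, hY, hX01, hY01, A, hA, hXA, hYA⟩ := hXY
  have hX2 : MemLp X 2 μ := memLp_of_bounded (.of_forall hX01) hX.aestronglyMeasurable 2
  have hY2 : MemLp Y 2 μ := memLp_of_bounded (.of_forall hY01) hY.aestronglyMeasurable 2
  have hI : MemLp (A.indicator (fun _ => (1:ℝ))) 2 μ := (memLp_const 1).indicator hA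
  intro hcorr
  have hcov : cov[X, Y; μ] = -(√(Var[X; μ]) * √(Var[Y; μ])) := by
    rw [← Real.sqrt_mul hVX.le, ← hcorr, covariance_eq_sub hX2 hY2]
    rfl
  have hs := Real.sqrt_pos.2 hVX
  have ht := Real.sqrt_pos.2 hVY
  have hs2 := Real.sq_sqrt hVX.le
  have ht2 := Real.sq_sqrt hVY.le
  set s := √(Var[X; μ])
  set t := √(Var[Y; μ])
  have hZ2 : MemLp (t • X + s • Y) 2 μ := (hX2.const_smul t).add (hY2.const_smul s)
  have hVZ : Var[t • X + s • Y; μ] = 0 := by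
    rw [variance_add (hX2.const_smul t) (hY2.const_smul s), variance_smul, variance_smul,
      covariance_smul_left, covariance_smul_right, hcov, ← hs2, ← ht2]
    ring
  have hZ0 : cov[t • X + s • Y, A.indicator (fun _ => (1:ℝ)); μ] = 0 := by
    refine integral_eq_zero_of_ae ?_
    filter_upwards [ae_eq_integral_of_variance_eq_zero hZ2 hVZ] with ω hω
    rw [hω, sub_self, zero_mul, Pi.zero_apply]
  rw [covariance_add_left (hX2.const_smul t) (hY2.const_smul s) hI, covariance_smul_left,
    covariance_smul_left, covariance_indicator_eq_variance hX hX2 hA hXA,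
    covariance_indicator_eq_variance hY hY2 hA hYA] at hZ0
  have := mul_pos ht hVX
  have := mul_pos hs hVY
  linarith
end

section
/- Let (X,Y) be a coherent pair of random variables with E X = E Y = p. Then E|X − Y| ≤ 2p(1 − p) ≤ 1/2. -/
/-!
The bound follows from a linear-programming dual certificate. Let `a = 1_A`. For every bounded
Borel `f`, the defining property of conditional expectation gives `E[(a - X) f(X)] = 0`, and the
same holds for `Y`; moreover `E a = p`. So it suffices to find a bounded `f` with, pointwise,

  `|x - y| ≤ 2p² + (2 - 4p) a + (a - x) f(x) + (a - y) f(y)`,   `x, y ∈ [0,1]`, `a ∈ {0,1}`,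

because the right-hand side integrates to `2p² + (2 - 4p) p = 2p(1 - p)`. The function
`f(x) = min(1, 2p²/x - 1)` works: it satisfies

* `x f(x) ≤ x` and `x f(x) ≤ 2p² - x`, which gives the case `a = 0`;
* `(1-x) f(x) ≥ -(1-x)` and `(1-x) f(x) ≥ (1-x) - 2(1-p)²`, which gives the case `a = 1`. The
  last bound amounts to `p²(1-x) + (1-p)²x - x(1-x) = (p-x)² ≥ 0`.

The certificate is `abs_sub_le_certificate`, the orthogonality relation is `integral_sub_mul_eq_zero`.
-/

open MeasureTheory

/-- The dual multiplier `min(1, 2p²/x - 1)` for `x ≥ 0`, written piecewise so that it equals `1`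
at `x = 0`. -/
noncomputable def dualFun (p x : ℝ) : ℝ := if x ≤ p ^ 2 then 1 else 2 * p ^ 2 / x - 1

lemma measurable_dualFun (p : ℝ) : Measurable (dualFun p) := by
  unfold dualFun
  exact Measurable.ite measurableSet_Iic measurable_const (by fun_prop)

lemma dualFun_mem (p x : ℝ) : -1 ≤ dualFun p x ∧ dualFun p x ≤ 1 := by
  unfold dualFun
  split_ifs with h
  · norm_num
  · push Not at h
    have hx : 0 < x := lt_of_le_of_lt (sq_nonneg p) h
    have h1 : 0 ≤ 2 * p ^ 2 / x := by positivity
    have h2 : 2 * p ^ 2 / x ≤ 2 := by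
      rw [div_le_iff₀ hx]
      linarith
    constructor <;> linarith

lemma mul_dualFun_le (p x : ℝ) : x * dualFun p x ≤ 2 * p ^ 2 - x := by
  unfold dualFun
  split_ifs with h
  · linarith
  · push Not at h
    have hx : 0 < x := lt_of_le_of_lt (sq_nonneg p) h
    have : x * (2 * p ^ 2 / x - 1) = 2 * p ^ 2 - x := by field_simp
    exact this.le

lemma le_mul_dualFun (p x : ℝ) :
    (1 - x) - 2 * (1 - p) ^ 2 ≤ (1 - x) * dualFun p x := by
  unfold dualFun
  split_ifs with h
  · nlinarith [sq_nonneg (1 - p)]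
  · push Not at h
    have hx : 0 < x := lt_of_le_of_lt (sq_nonneg p) h
    have : (1 - x) * (2 * p ^ 2 / x - 1) - ((1 - x) - 2 * (1 - p) ^ 2)
        = 2 * (p - x) ^ 2 / x := by
      field_simp
      ring
    have h2 : 0 ≤ 2 * (p - x) ^ 2 / x := by positivity
    linarith

/-- The pointwise dual certificate; `a` is the value of the indicator of the event. -/
lemma abs_sub_le_certificate {p x y a : ℝ} (hx : x ∈ Set.Icc (0 : ℝ) 1)
    (hy : y ∈ Set.Icc (0 : ℝ) 1) (ha : a = 0 ∨ a = 1) :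
    |x - y| ≤ 2 * p ^ 2 + (2 - 4 * p) * a + (a - x) * dualFun p x + (a - y) * dualFun p y := by
  obtain ⟨hx0, hx1⟩ := hx
  obtain ⟨hy0, hy1⟩ := hy
  obtain ⟨fx1, fx2⟩ := dualFun_mem p x
  obtain ⟨fy1, fy2⟩ := dualFun_mem p y
  rcases ha with rfl | rfl
  · have hx2 := mul_dualFun_le p x
    have hy2 := mul_dualFun_le p y
    have hx3 := mul_le_mul_of_nonneg_left fx2 hx0
    have hy3 := mul_le_mul_of_nonneg_left fy2 hy0
    rw [abs_le]
    constructor <;> linarith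
  · have hx2 := le_mul_dualFun p x
    have hy2 := le_mul_dualFun p y
    have hx3 := mul_le_mul_of_nonneg_left fx1 (sub_nonneg.2 hx1)
    have hy3 := mul_le_mul_of_nonneg_left fy1 (sub_nonneg.2 hy1)
    rw [abs_le]
    constructor <;> linarith

lemma integrable_sub_mul {Ω : Type*} [MeasurableSpace Ω] {μ : Measure Ω} [IsProbabilityMeasure μ]
    {X a : Ω → ℝ} (hX : Measurable X) (hXi : Integrable X μ) (ha : Integrable a μ)
    {f : ℝ → ℝ} (hf : Measurable f) (hfb : ∀ x, |f x| ≤ 1) :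
    Integrable (fun ω => (a ω - X ω) * f (X ω)) μ :=
  (ha.sub hXi).mul_bdd (c := 1) (hf.comp hX).aestronglyMeasurable
    (Filter.Eventually.of_forall fun ω => hfb (X ω))

/-- If `X = E[a | σ(X)]`, then `a - X` is orthogonal to bounded Borel functions of `X`. -/
lemma integral_sub_mul_eq_zero {Ω : Type*} [MeasurableSpace Ω] {μ : Measure Ω}
    [IsProbabilityMeasure μ] {X a : Ω → ℝ} (hX : Measurable X) (hXi : Integrable X μ)
    (ha : Integrable a μ) (hc : X =ᵐ[μ] μ[a | MeasurableSpace.comap X inferInstance])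
    {f : ℝ → ℝ} (hf : Measurable f) (hfb : ∀ x, |f x| ≤ 1) :
    ∫ ω, (a ω - X ω) * f (X ω) ∂μ = 0 := by
  have hm := hX.comap_le
  have hfX : StronglyMeasurable[MeasurableSpace.comap X inferInstance] (fun ω => f (X ω)) :=
    (hf.comp (comap_measurable X)).stronglyMeasurable
  have hb : ∀ᵐ ω ∂μ, ‖f (X ω)‖ ≤ 1 := Filter.Eventually.of_forall fun ω => hfb (X ω)
  have hfm : AEStronglyMeasurable (fun ω => f (X ω)) μ := (hf.comp hX).aestronglyMeasurable
  have hia : Integrable (fun ω => a ω * f (X ω)) μ := ha.mul_bdd (c := 1) hfm hb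
  have hiX : Integrable (fun ω => X ω * f (X ω)) μ := hXi.mul_bdd (c := 1) hfm hb
  have hpull := condExp_mul_of_stronglyMeasurable_right hfX hia ha
  have key : ∫ ω, a ω * f (X ω) ∂μ = ∫ ω, X ω * f (X ω) ∂μ := by
    rw [← integral_condExp hm]
    refine integral_congr_ae ?_
    filter_upwards [hpull, hc] with ω h1 h2
    exact h1.trans (congrArg (· * f (X ω)) h2.symm)
  simp only [sub_mul]
  rw [integral_sub hia hiX, key, sub_self]

theorem stmt_15 {Ω : Type*} [MeasurableSpace Ω] (μ : Measure Ω) [IsProbabilityMeasure μ]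
    (X Y : Ω → ℝ) (hXY : IsCoherent μ X Y) (p : ℝ)
    (hmX : ∫ ω, X ω ∂μ = p) (hmY : ∫ ω, Y ω ∂μ = p) :
    (∫ ω, |X ω - Y ω| ∂μ) ≤ 2 * p * (1 - p) ∧ 2 * p * (1 - p) ≤ 1/2 := by
  refine ⟨?_, by nlinarith [sq_nonneg (2 * p - 1)]⟩
  obtain ⟨hX, hY, hX01, hY01, A, hA, hcX, hcY⟩ := hXY
  set a : Ω → ℝ := A.indicator (fun _ => (1:ℝ)) with ha_def
  have ha : Integrable a μ := (integrable_const (1 : ℝ)).indicator hA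
  have ha01 : ∀ ω, a ω = 0 ∨ a ω = 1 := fun ω => by
    by_cases h : ω ∈ A <;> simp [ha_def, h]
  have hXi : Integrable X μ := Integrable.of_mem_Icc 0 1 hX.aemeasurable
    (Filter.Eventually.of_forall hX01)
  have hYi : Integrable Y μ := Integrable.of_mem_Icc 0 1 hY.aemeasurable
    (Filter.Eventually.of_forall hY01)
  have hap : ∫ ω, a ω ∂μ = p := by
    rw [← hmX, ← integral_condExp hX.comap_le]
    exact (integral_congr_ae hcX).symm
  have hf := measurable_dualFun p
  have hfb : ∀ x, |dualFun p x| ≤ 1 := fun x => abs_le.2 (dualFun_mem p x)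
  have i1 : Integrable (fun ω => 2 * p ^ 2 + (2 - 4 * p) * a ω) μ :=
    (integrable_const _).add (ha.const_mul _)
  have i2 := integrable_sub_mul hX hXi ha hf hfb
  have i3 := integrable_sub_mul hY hYi ha hf hfb
  have i12 : Integrable (fun ω => 2 * p ^ 2 + (2 - 4 * p) * a ω
      + (a ω - X ω) * dualFun p (X ω)) μ := i1.add i2
  calc ∫ ω, |X ω - Y ω| ∂μ
      ≤ ∫ ω, (2 * p ^ 2 + (2 - 4 * p) * a ω + (a ω - X ω) * dualFun p (X ω)
          + (a ω - Y ω) * dualFun p (Y ω)) ∂μ :=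
        integral_mono (hXi.sub hYi).abs (i12.add i3)
          fun ω => abs_sub_le_certificate (hX01 ω) (hY01 ω) (ha01 ω)
    _ = 2 * p * (1 - p) := by
        rw [integral_add i12 i3, integral_add i1 i2,
          integral_add (integrable_const _) (ha.const_mul _), integral_const, integral_const_mul, hap,
          integral_sub_mul_eq_zero hX hXi ha hcX hf hfb,
          integral_sub_mul_eq_zero hY hYi ha hcY hf hfb]
        simp only [probReal_univ, one_smul]
        ring
end

section
/- Let (X,Y) be a coherent pair of random variables and let r > 0. Then E[|X − Y|^r] ≤ (2 − 2^{−r})/(1 + r). -/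
/-!
Write `s = 2⁻ʳ` and let `A` be the event witnessing coherence. With `G x = max 0 ((1 - x)ʳ - s)`
the pointwise bound
`|X - Y|ʳ ≤ s + (1_A G(X) + 1_{Aᶜ} G(1 - X)) + (1_A G(Y) + 1_{Aᶜ} G(1 - Y))`
holds: if, say, `X ≥ Y`, then `|X - Y| ≤ 1 - Y` handles `A`, and `|X - Y| ≤ X` handles `Aᶜ`.
Since `X = E[1_A | X]`, the first bracket has expectation `E[X G(X) + (1 - X) G(1 - X)]`
(`integral_indicator_mix_le`), and likewise for `Y`. At most one of `G(x)`, `G(1 - x)` is nonzero,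
so everything reduces to the one-variable inequality
`(1 - x)(xʳ - s) ≤ C` for `x > 0`, where `C = 1/(r+1) - s + r s / (2 (r+1))` (`key_ineq`); it
follows from two applications of Bernoulli's inequality. Finally `s + 2 C = (2 - s)/(1 + r)`.

The bound is the integrated form of the tail estimate `P(|X - Y| ≥ 1 - δ) ≤ 2 δ`, `δ < 1/2`:
`C` equals `∫ r tʳ⁻¹ (1 - t) dt` over `[1/2, 1]`.
-/

open MeasureTheory

/-- The constant `∫ r tʳ⁻¹ (1 - t) dt` over `[1/2, 1]`, in closed form. -/
noncomputable def tailConst (r : ℝ) : ℝ :=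
  1 / (r + 1) - 2 ^ (-r) + r * 2 ^ (-r) / (2 * (r + 1))

/-- The weight `G` put on the event `A` at the value `x` of either variable. -/
noncomputable def weight (r x : ℝ) : ℝ := max 0 ((1 - x) ^ r - 2 ^ (-r))

lemma key_ineq {r x : ℝ} (hr : 0 < r) (hx : 0 < x) :
    (1 - x) * (x ^ r - 2 ^ (-r)) ≤ tailConst r := by
  have hs : (0:ℝ) < 2 ^ (-r) := by positivity
  have hx1 : x ^ (r + 1) = x ^ r * x := by rw [Real.rpow_add hx, Real.rpow_one]
  have hxp : 0 < x ^ r := by positivity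
  -- Bernoulli at `1/x`, multiplied by `x ^ (r + 1)`
  have h1 : (r + 1) * x ^ r - r * (x ^ r * x) ≤ 1 := by
    have hb := one_add_mul_self_le_rpow_one_add (s := x⁻¹ - 1) (p := r + 1)
      (by have : 0 < x⁻¹ := by positivity
          linarith) (by linarith)
    rw [add_sub_cancel, Real.inv_rpow hx.le, hx1] at hb
    have hb' := mul_le_mul_of_nonneg_right hb (by positivity : 0 ≤ x ^ r * x)
    rw [inv_mul_cancel₀ (by positivity)] at hb'
    have : (1 + (r + 1) * (x⁻¹ - 1)) * (x ^ r * x) = (r + 1) * x ^ r - r * (x ^ r * x) := by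
      field_simp
      ring
    linarith
  -- Bernoulli at `2x`, multiplied by `2 ^ (-r)`
  have h2 : (2 * x * (r + 1) - r) * 2 ^ (-r) ≤ 2 * (x ^ r * x) := by
    have hb := one_add_mul_self_le_rpow_one_add (s := 2 * x - 1) (p := r + 1)
      (by linarith) (by linarith)
    rw [add_sub_cancel, Real.mul_rpow (by norm_num) hx.le, hx1, Real.rpow_add (by norm_num),
      Real.rpow_one] at hb
    have hb' := mul_le_mul_of_nonneg_right hb hs.le
    have h22 : (2:ℝ) ^ r * 2 ^ (-r) = 1 := by
      rw [← Real.rpow_add (by norm_num)]; simp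
    have : (2:ℝ) ^ r * 2 * (x ^ r * x) * 2 ^ (-r) = 2 * (x ^ r * x) := by
      linear_combination 2 * (x ^ r * x) * h22
    have : (1 + (r + 1) * (2 * x - 1)) = 2 * x * (r + 1) - r := by ring
    rw [this] at hb'
    linarith
  unfold tailConst
  have hr1 : 0 < r + 1 := by linarith
  have e : 1 / (r + 1) - (2:ℝ) ^ (-r) + r * 2 ^ (-r) / (2 * (r + 1))
      = (1 + r * 2 ^ (-r) / 2 - (r + 1) * 2 ^ (-r)) / (r + 1) := by
    field_simp
    ring
  rw [e, le_div_iff₀ hr1]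
  nlinarith

lemma tailConst_nonneg {r : ℝ} (hr : 0 < r) : 0 ≤ tailConst r := by
  simpa using key_ineq hr one_pos

lemma two_rpow_neg (r : ℝ) : (2:ℝ) ^ (-r) = (1 / 2) ^ r := by
  rw [Real.rpow_neg (by norm_num), one_div, Real.inv_rpow (by norm_num)]

lemma weight_nonneg (r x : ℝ) : 0 ≤ weight r x := le_max_left _ _

lemma weight_eq_zero {r x : ℝ} (hr : 0 < r) (hx : x ≤ 1) (h : 1 / 2 ≤ x) : weight r x = 0 := by
  refine max_eq_left ?_
  rw [two_rpow_neg, sub_nonpos]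
  exact Real.rpow_le_rpow (by linarith) (by linarith) hr.le

lemma weight_le_one {r x : ℝ} (hr : 0 < r) (hx : x ∈ Set.Icc (0:ℝ) 1) : weight r x ≤ 1 := by
  refine max_le zero_le_one ?_
  have h1 : (1 - x) ^ r ≤ 1 := Real.rpow_le_one (by linarith [hx.2]) (by linarith [hx.1]) hr.le
  have h2 : (0:ℝ) < 2 ^ (-r) := by positivity
  linarith

lemma measurable_weight (r : ℝ) : Measurable (weight r) := by
  unfold weight
  fun_prop

lemma mix_half {r x : ℝ} (hr : 0 < r) (hx : x ≤ 1) (h : 1 / 2 ≤ x) :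
    x * weight r x + (1 - x) * weight r (1 - x) ≤ tailConst r := by
  rw [weight_eq_zero hr hx h, mul_zero, zero_add]
  unfold weight
  rw [sub_sub_cancel, mul_max_of_nonneg _ _ (by linarith), mul_zero]
  exact max_le (tailConst_nonneg hr) (key_ineq hr (by linarith))

lemma mix_le {r x : ℝ} (hr : 0 < r) (hx : x ∈ Set.Icc (0:ℝ) 1) :
    x * weight r x + (1 - x) * weight r (1 - x) ≤ tailConst r := by
  rcases le_total (1 / 2) x with h | h
  · exact mix_half hr hx.2 h
  · have := mix_half (x := 1 - x) hr (by linarith [hx.1]) (by linarith)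
    rw [sub_sub_cancel] at this
    linarith

lemma abs_sub_rpow_le_left {r x y : ℝ} (hr : 0 < r) (hx : x ∈ Set.Icc (0:ℝ) 1)
    (hy : y ∈ Set.Icc (0:ℝ) 1) : |x - y| ^ r ≤ 2 ^ (-r) + weight r x + weight r y := by
  have hwx := weight_nonneg r x
  have hwy := weight_nonneg r y
  have hx' : (1 - x) ^ r - 2 ^ (-r) ≤ weight r x := le_max_right _ _
  have hy' : (1 - y) ^ r - 2 ^ (-r) ≤ weight r y := le_max_right _ _
  rcases le_total x y with h | h
  · have : |x - y| ^ r ≤ (1 - x) ^ r := by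
      rw [abs_of_nonpos (by linarith)]
      exact Real.rpow_le_rpow (by linarith) (by linarith [hy.2]) hr.le
    linarith
  · have : |x - y| ^ r ≤ (1 - y) ^ r := by
      rw [abs_of_nonneg (by linarith)]
      exact Real.rpow_le_rpow (by linarith) (by linarith [hx.2]) hr.le
    linarith

lemma abs_sub_rpow_le_right {r x y : ℝ} (hr : 0 < r) (hx : x ∈ Set.Icc (0:ℝ) 1)
    (hy : y ∈ Set.Icc (0:ℝ) 1) :
    |x - y| ^ r ≤ 2 ^ (-r) + weight r (1 - x) + weight r (1 - y) := by
  have h := abs_sub_rpow_le_left (x := 1 - x) (y := 1 - y) hr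
    ⟨by linarith [hx.2], by linarith [hx.1]⟩ ⟨by linarith [hy.2], by linarith [hy.1]⟩
  rwa [sub_sub_sub_cancel_left, abs_sub_comm] at h

/-- If `X = E[1_A | X]`, then `1_A` may be replaced by `X` in the expectation of
`1_A G(X) + 1_{Aᶜ} G(1 - X)`, after which `mix_le` bounds the integrand pointwise. -/
lemma integral_indicator_mix_le {Ω : Type*} [MeasurableSpace Ω] (μ : Measure Ω)
    [IsProbabilityMeasure μ] {X : Ω → ℝ} (hX : Measurable X)
    (hX01 : ∀ ω, X ω ∈ Set.Icc (0:ℝ) 1) {A : Set Ω} (hA : MeasurableSet A)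
    (hXA : X =ᵐ[μ] μ[A.indicator (fun _ => (1:ℝ)) | MeasurableSpace.comap X inferInstance])
    {r : ℝ} (hr : 0 < r) :
    Integrable (fun ω => weight r (1 - X ω)
      + (weight r (X ω) - weight r (1 - X ω)) * A.indicator (fun _ => (1:ℝ)) ω) μ ∧
    ∫ ω, (weight r (1 - X ω)
      + (weight r (X ω) - weight r (1 - X ω)) * A.indicator (fun _ => (1:ℝ)) ω) ∂μ
      ≤ tailConst r := by
  have hm : MeasurableSpace.comap X inferInstance ≤ (inferInstance : MeasurableSpace Ω) :=
    hX.comap_le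
  have hw := measurable_weight r
  have hX01' : ∀ ω, 1 - X ω ∈ Set.Icc (0:ℝ) 1 := fun ω =>
    ⟨by linarith [(hX01 ω).2], by linarith [(hX01 ω).1]⟩
  set d : ℝ → ℝ := fun x => weight r x - weight r (1 - x) with hd
  have hdm : Measurable d := by
    rw [hd]; fun_prop
  have hdb : ∀ ω, ‖d (X ω)‖ ≤ 1 := fun ω => by
    have h1 := weight_nonneg r (X ω)
    have h2 := weight_nonneg r (1 - X ω)
    have h3 := weight_le_one hr (hX01 ω)
    have h4 := weight_le_one hr (hX01' ω)
    rw [Real.norm_eq_abs, abs_le]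
    constructor <;> simp only [hd] <;> linarith
  have hi1 : Integrable (fun ω => weight r (1 - X ω)) μ := by
    refine Integrable.of_bound (by fun_prop : Measurable _).aestronglyMeasurable 1
      (Filter.Eventually.of_forall fun ω => ?_)
    rw [Real.norm_of_nonneg (weight_nonneg _ _)]
    exact weight_le_one hr (hX01' ω)
  have hiA : Integrable (A.indicator (fun _ => (1:ℝ))) μ :=
    (integrable_const _).indicator hA
  have hiX : Integrable X μ := by
    refine Integrable.of_bound hX.aestronglyMeasurable 1
      (Filter.Eventually.of_forall fun ω => ?_)
    rw [Real.norm_of_nonneg (hX01 ω).1]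
    exact (hX01 ω).2
  have hi2 : Integrable (fun ω => d (X ω) * A.indicator (fun _ => (1:ℝ)) ω) μ :=
    hiA.bdd_mul (hdm.comp hX).aestronglyMeasurable (Filter.Eventually.of_forall hdb)
  have hi3 : Integrable (fun ω => d (X ω) * X ω) μ :=
    hiX.bdd_mul (hdm.comp hX).aestronglyMeasurable (Filter.Eventually.of_forall hdb)
  have hdX : StronglyMeasurable[MeasurableSpace.comap X inferInstance] (fun ω => d (X ω)) :=
    (hdm.comp (comap_measurable X)).stronglyMeasurable
  have key : ∫ ω, d (X ω) * A.indicator (fun _ => (1:ℝ)) ω ∂μ = ∫ ω, d (X ω) * X ω ∂μ := by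
    rw [← integral_condExp hm]
    refine integral_congr_ae ?_
    filter_upwards [condExp_mul_of_stronglyMeasurable_left hdX hi2 hiA, hXA] with ω h1 h2
    exact h1.trans (congrArg (d (X ω) * ·) h2.symm)
  refine ⟨hi1.add hi2, ?_⟩
  calc _ = ∫ ω, weight r (1 - X ω) ∂μ
        + ∫ ω, d (X ω) * A.indicator (fun _ => (1:ℝ)) ω ∂μ := integral_add hi1 hi2
    _ = ∫ ω, (weight r (1 - X ω) + d (X ω) * X ω) ∂μ := by
        rw [key, integral_add hi1 hi3]
    _ ≤ ∫ _, tailConst r ∂μ := by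
        refine integral_mono (hi1.add hi3) (integrable_const _) fun ω => ?_
        have := mix_le hr (hX01 ω)
        simp only [hd]
        linarith
    _ = tailConst r := by simp

theorem stmt_17 {Ω : Type*} [MeasurableSpace Ω] (μ : Measure Ω) [IsProbabilityMeasure μ]
    (X Y : Ω → ℝ) (hXY : IsCoherent μ X Y) (r : ℝ) (hr : 0 < r) :
    (∫ ω, |X ω - Y ω| ^ r ∂μ) ≤ (2 - 2 ^ (-r)) / (1 + r) := by
  obtain ⟨hX, hY, hX01, hY01, A, hA, hXA, hYA⟩ := hXY
  obtain ⟨hiX, hbX⟩ := integral_indicator_mix_le μ hX hX01 hA hXA hr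
  obtain ⟨hiY, hbY⟩ := integral_indicator_mix_le μ hY hY01 hA hYA hr
  have hc : Integrable (fun _ : Ω => (2:ℝ) ^ (-r)) μ := integrable_const _
  have hsum := (hc.add hiX).add hiY
  have hle : ∫ ω, |X ω - Y ω| ^ r ∂μ ≤ _ :=
    integral_mono_of_nonneg (Filter.Eventually.of_forall fun ω => by positivity) hsum
      (Filter.Eventually.of_forall fun ω => by
        by_cases hω : ω ∈ A
        · have := abs_sub_rpow_le_left hr (hX01 ω) (hY01 ω)
          simpa [hω] using this
        · have := abs_sub_rpow_le_right hr (hX01 ω) (hY01 ω)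
          simpa [hω] using this)
  rw [integral_add' (hc.add hiX) hiY, integral_add' hc hiX] at hle
  have hconst : ∫ _ : Ω, (2:ℝ) ^ (-r) ∂μ = 2 ^ (-r) := by simp
  have hfin : (2:ℝ) ^ (-r) + tailConst r + tailConst r = (2 - 2 ^ (-r)) / (1 + r) := by
    unfold tailConst
    have : 1 + r ≠ 0 := by linarith
    have : r + 1 ≠ 0 := by linarith
    field_simp
    ring
  linarith
end

section
/- The set of coherent joint distributions on [0,1]² is convex: if (X,Y) and (X′,Y′) are coherent pairs (possibly on different probability spaces) and t ∈ [0,1], then there exists a coherent pair (W₁,W₂) whose joint law on [0,1]² equals t times the law of (X,Y) plus (1 − t) times the law of (X′,Y′). -/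
open MeasureTheory

/-- `X` is calibrated for the event `A` under `μ`: the integral of `X` over each event `{X ∈ B}`
is the measure of `{X ∈ B} ∩ A`. The integral is the `ℝ≥0∞`-valued one, so that both sides are
linear in `μ` without integrability conditions. -/
def Calibrated {Ω : Type*} [MeasurableSpace Ω] (μ : Measure Ω) (X : Ω → ℝ) (A : Set Ω) : Prop :=
  ∀ B : Set ℝ, MeasurableSet B →
    ∫⁻ ω in X ⁻¹' B, ENNReal.ofReal (X ω) ∂μ = μ (X ⁻¹' B ∩ A)

lemma integrable_of_mem_Icc {Ω : Type*} [MeasurableSpace Ω] {μ : Measure Ω}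
    [IsProbabilityMeasure μ] {X : Ω → ℝ} (hX : Measurable X)
    (hX01 : ∀ ω, X ω ∈ Set.Icc (0 : ℝ) 1) : Integrable X μ := by
  refine Integrable.of_bound hX.aestronglyMeasurable 1 (Filter.Eventually.of_forall fun ω => ?_)
  rw [Real.norm_eq_abs, abs_of_nonneg (hX01 ω).1]
  exact (hX01 ω).2

lemma setIntegral_indicator_one {Ω : Type*} [MeasurableSpace Ω] (μ : Measure Ω)
    {A : Set Ω} (hA : MeasurableSet A) (s : Set Ω) :
    ∫ ω in s, A.indicator (fun _ => (1 : ℝ)) ω ∂μ = μ.real (s ∩ A) := by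
  rw [setIntegral_indicator hA]
  simp

/-- The real-valued form of calibration, for a random variable with values in `[0,1]`. -/
lemma calibrated_iff_setIntegral {Ω : Type*} [MeasurableSpace Ω] {μ : Measure Ω}
    [IsProbabilityMeasure μ] {X : Ω → ℝ} {A : Set Ω} (hX : Measurable X)
    (hX01 : ∀ ω, X ω ∈ Set.Icc (0 : ℝ) 1) :
    Calibrated μ X A ↔
      ∀ B : Set ℝ, MeasurableSet B → ∫ ω in X ⁻¹' B, X ω ∂μ = μ.real (X ⁻¹' B ∩ A) := by
  refine forall₂_congr fun B _ => ?_
  have hint : Integrable X (μ.restrict (X ⁻¹' B)) := (integrable_of_mem_Icc hX hX01).restrict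
  have hnn : 0 ≤ ∫ ω in X ⁻¹' B, X ω ∂μ := integral_nonneg fun ω => (hX01 ω).1
  rw [← ofReal_integral_eq_lintegral_ofReal hint
      (Filter.Eventually.of_forall fun ω => (hX01 ω).1), ← ofReal_measureReal,
    ENNReal.ofReal_eq_ofReal_iff hnn measureReal_nonneg]

/-- A `[0,1]`-valued `X` is a version of the conditional probability of `A` given `σ(X)` exactly
when it is calibrated for `A`, because the events of `σ(X)` are the sets `X ⁻¹' B`. -/
lemma ae_eq_condExp_iff_calibrated {Ω : Type*} [mΩ : MeasurableSpace Ω] {μ : Measure Ω}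
    [IsProbabilityMeasure μ] {X : Ω → ℝ} {A : Set Ω} (hX : Measurable X)
    (hX01 : ∀ ω, X ω ∈ Set.Icc (0 : ℝ) 1) (hA : MeasurableSet A) :
    X =ᵐ[μ] μ[A.indicator (fun _ => (1 : ℝ)) | MeasurableSpace.comap X inferInstance] ↔
      Calibrated μ X A := by
  have hm : MeasurableSpace.comap X inferInstance ≤ mΩ := hX.comap_le
  have hf : Integrable (A.indicator (fun _ => (1 : ℝ))) μ := (integrable_const 1).indicator hA
  rw [calibrated_iff_setIntegral hX hX01]
  constructor
  · intro h B hB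
    rw [← setIntegral_indicator_one μ hA, ← setIntegral_condExp hm hf ⟨B, hB, rfl⟩]
    exact setIntegral_congr_ae (hX hB) (h.mono fun ω hω _ => hω)
  · intro h
    refine ae_eq_condExp_of_forall_setIntegral_eq hm hf
      (fun s _ _ => (integrable_of_mem_Icc hX hX01).integrableOn) ?_
      (comap_measurable X).stronglyMeasurable.aestronglyMeasurable
    rintro s ⟨B, hB, rfl⟩ -
    rw [h B hB, setIntegral_indicator_one μ hA]

lemma Calibrated.map {Ω Ω' : Type*} [MeasurableSpace Ω] [MeasurableSpace Ω'] {μ : Measure Ω}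
    {φ : Ω → Ω'} {W : Ω' → ℝ} {A : Set Ω'} (hφ : Measurable φ) (hW : Measurable W)
    (hA : MeasurableSet A) (h : Calibrated μ (W ∘ φ) (φ ⁻¹' A)) :
    Calibrated (μ.map φ) W A := by
  intro B hB
  rw [setLIntegral_map (hW hB) hW.ennreal_ofReal hφ, Measure.map_apply hφ ((hW hB).inter hA)]
  exact h B hB

lemma Calibrated.smul_add_smul {Ω : Type*} [MeasurableSpace Ω] {μ ν : Measure Ω} {W : Ω → ℝ}
    {A : Set Ω} (hμ : Calibrated μ W A) (hν : Calibrated ν W A) (a b : ENNReal) :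
    Calibrated (a • μ + b • ν) W A := by
  intro B hB
  simp only [Measure.restrict_add, Measure.restrict_smul, lintegral_add_measure,
    lintegral_smul_measure, hμ B hB, hν B hB, Measure.add_apply, Measure.smul_apply]

theorem stmt_18 {Ω₁ Ω₂ : Type*} [MeasurableSpace Ω₁] [MeasurableSpace Ω₂]
    (μ₁ : Measure Ω₁) [IsProbabilityMeasure μ₁] (μ₂ : Measure Ω₂) [IsProbabilityMeasure μ₂]
    (X Y : Ω₁ → ℝ) (X' Y' : Ω₂ → ℝ)
    (h₁ : IsCoherent μ₁ X Y) (h₂ : IsCoherent μ₂ X' Y')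
    (t : ℝ) (ht0 : 0 ≤ t) (ht1 : t ≤ 1) :
    ∃ (Ω : Type) (_ : MeasurableSpace Ω) (μ : Measure Ω) (_ : IsProbabilityMeasure μ)
      (W₁ W₂ : Ω → ℝ), IsCoherent μ W₁ W₂ ∧
      Measure.map (fun ω => (W₁ ω, W₂ ω)) μ =
        ENNReal.ofReal t • Measure.map (fun ω => (X ω, Y ω)) μ₁ +
          ENNReal.ofReal (1 - t) • Measure.map (fun ω => (X' ω, Y' ω)) μ₂ := by
  obtain ⟨hX, hY, hX01, hY01, A, hA, hXA, hYA⟩ := h₁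
  obtain ⟨hX', hY', hX01', hY01', A', hA', hXA', hYA'⟩ := h₂
  rw [ae_eq_condExp_iff_calibrated hX hX01 hA] at hXA
  rw [ae_eq_condExp_iff_calibrated hY hY01 hA] at hYA
  rw [ae_eq_condExp_iff_calibrated hX' hX01' hA'] at hXA'
  rw [ae_eq_condExp_iff_calibrated hY' hY01' hA'] at hYA'
  let Ω := Set.Icc (0 : ℝ) 1 × Set.Icc (0 : ℝ) 1 × Prop
  let φ : Ω₁ → Ω := fun ω => (⟨X ω, hX01 ω⟩, ⟨Y ω, hY01 ω⟩, ω ∈ A)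
  let φ' : Ω₂ → Ω := fun ω => (⟨X' ω, hX01' ω⟩, ⟨Y' ω, hY01' ω⟩, ω ∈ A')
  have hφ : Measurable φ := hX.subtype_mk.prodMk (hY.subtype_mk.prodMk hA.mem)
  have hφ' : Measurable φ' := hX'.subtype_mk.prodMk (hY'.subtype_mk.prodMk hA'.mem)
  let W₁ : Ω → ℝ := fun p => p.1
  let W₂ : Ω → ℝ := fun p => p.2.1
  have hW₁ : Measurable W₁ := measurable_subtype_coe.comp measurable_fst
  have hW₂ : Measurable W₂ :=
    measurable_subtype_coe.comp (measurable_fst.comp measurable_snd)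
  let E : Set Ω := {p | p.2.2}
  have hE : MeasurableSet E :=
    measurableSet_setOfPred.2 (measurable_snd.comp measurable_snd)
  let μ : Measure Ω := ENNReal.ofReal t • μ₁.map φ + ENNReal.ofReal (1 - t) • μ₂.map φ'
  have hμ : IsProbabilityMeasure μ := by
    constructor
    simp only [μ, Measure.add_apply, Measure.smul_apply, smul_eq_mul,
      Measure.map_apply hφ MeasurableSet.univ, Measure.map_apply hφ' MeasurableSet.univ,
      Set.preimage_univ, measure_univ, mul_one]
    rw [← ENNReal.ofReal_add ht0 (sub_nonneg.2 ht1), add_sub_cancel, ENNReal.ofReal_one]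
  refine ⟨Ω, inferInstance, μ, hμ, W₁, W₂,
    ⟨hW₁, hW₂, fun p => p.1.2, fun p => p.2.1.2, E, hE, ?_, ?_⟩, ?_⟩
  · rw [ae_eq_condExp_iff_calibrated hW₁ (fun p => p.1.2) hE]
    exact (Calibrated.map hφ hW₁ hE hXA).smul_add_smul (Calibrated.map hφ' hW₁ hE hXA') _ _
  · rw [ae_eq_condExp_iff_calibrated hW₂ (fun p => p.2.1.2) hE]
    exact (Calibrated.map hφ hW₂ hE hYA).smul_add_smul (Calibrated.map hφ' hW₂ hE hYA') _ _
  · have hW : Measurable fun p => (W₁ p, W₂ p) := hW₁.prodMk hW₂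
    rw [Measure.map_add _ _ hW, Measure.map_smul, Measure.map_smul,
      Measure.map_map hW hφ, Measure.map_map hW hφ']
    rfl
end
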